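/- Assume (SA0)–(SA2). Then there exist constants d > 0 and γ̄ ≥ 0 such that for every ξ ≥ 0, defining the cooling schedule γ_i := log(i+1)/(d(1+ξ)) + γ̄ and the kernels P_i := K_{γ_i}, for every initial probability measure μ on ℝ one has lim_{n→∞} ‖μ P_1 ⋯ P_n − π_{γ_n}‖_TV = 0. -/

import Mathlib

/-!
The chain is compared with the moving targets `π_{γ_n}` by a one-step contraction whose rate decays
slowly enough, in the spirit of Harris' theorem.

* **Drift.** Put `V = exp (f - m₀)`, where `m₀ + α |x| ≤ f x`. A proposal changes `V` in expectation
  by a factor at most `1 + 1 / (γ - 1)`, because upward moves are accepted with probability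
  `exp (-γ Δ)` only (`accept_exp_le`), and from far out a fixed proportion of the proposals lowers
  `f` by at least `α`. So `K_γ V ≤ (1 - δ) V + B` with `δ, B` independent of `γ ≥ γ̄`
  (`exists_uniform_drift`).
* **Minorization.** On `{V ≤ 4B/δ}` the kernel `K_γ` dominates `q₀ exp (-D γ)` times Lebesgue measure
  on `[0, 1]`, where `D` bounds `f - m₀` on `[0, 1]` (`rwmKernel_minorization`).
* **Contraction.** With minorization mass `ε`, a step contracts the oscillation seminorm with weight
  `1 + (ε / 2B) V` by the factor `1 - ε δ / 4` (`harris_step`). As `ε_n = q₀ exp (-D γ_n)` decreases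
  in `n`, so does the weight, and the estimates of successive steps chain together.
* **Moving targets.** `π_γ` is reversible for `K_γ` (`gibbs_invariant`), and `π_γ`, `π_γ'` differ in
  the `V`-weighted norm by at most `C (γ' - γ) exp (2 D γ')` (`gibbs_diff`).
* **Schedule.** For `d = 6 D` the increments of `γ_n` are of order `1 / n` while `exp (3 D γ_n)` is at
  most of order `√n`. Hence the target displacements are `o(ε_n)` and `∑ ε_n = ∞`
  (`schedule_props`), which forces the distance to `0` (`tendsto_zero_of_contraction`,
  `chain_tendsto_of_integrable`) whenever `μ` integrates `V`.

A general `μ` is approximated in total variation by its conditionings on sublevel sets of `V`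
(`exists_integrable_approx`), and Markov kernels do not increase total variation.
-/

open MeasureTheory ProbabilityTheory Set
open scoped ENNReal

/-- The `f`-total variation distance (for `f ≡ 1`, the total variation norm). -/
noncomputable def fDist {X : Type*} [MeasurableSpace X] (f : X → ℝ) (μ ν : Measure X) : ℝ≥0∞ :=
  ⨆ (φ : X → ℝ) (_ : Measurable φ) (_ : ∀ x, |φ x| ≤ f x) (_ : Integrable φ μ)
    (_ : Integrable φ ν), ENNReal.ofReal |∫ x, φ x ∂μ - ∫ x, φ x ∂ν|

/-- `iterMeasNH P ξ n = ξ P₁ ⋯ Pₙ`. -/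
noncomputable def iterMeasNH {X : Type*} [MeasurableSpace X] (P : ℕ → Kernel X X)
    (ξ : Measure X) : ℕ → Measure X
  | 0 => ξ
  | n + 1 => (iterMeasNH P ξ n).bind (fun x => P (n + 1) x)

/-- The random walk Metropolis–Hastings kernel `K_γ`. -/
noncomputable def rwmKernel (f q : ℝ → ℝ) (γ x : ℝ) : Measure ℝ :=
  volume.withDensity
      (fun y => ENNReal.ofReal (min 1 (Real.exp (-γ * (f y - f x))) * q (y - x))) +
    (∫⁻ y, ENNReal.ofReal ((1 - min 1 (Real.exp (-γ * (f y - f x)))) * q (y - x))) •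
      Measure.dirac x

/-- The Gibbs measure `π_γ(dx) ∝ exp(-γ f(x)) dx`. -/
noncomputable def gibbs (f : ℝ → ℝ) (γ : ℝ) : Measure ℝ :=
  (∫⁻ x, ENNReal.ofReal (Real.exp (-γ * f x)))⁻¹ •
    volume.withDensity (fun x => ENNReal.ofReal (Real.exp (-γ * f x)))


/-! ### Contraction in weighted oscillation seminorms -/

/-- A function with weighted oscillation bounded by `t` lies, up to an additive constant, below `t`
times the weight. -/
lemma exists_center {X : Type*} [Nonempty X] (φ V : X → ℝ) (t β : ℝ)
    (h : ∀ x y, |φ x - φ y| ≤ t * (2 + β * V x + β * V y)) :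
    ∃ c : ℝ, ∀ x, |φ x - c| ≤ t * (1 + β * V x) := by
  have key : ∀ x y, φ y - t * (1 + β * V y) ≤ φ x + t * (1 + β * V x) := by
    intro x y
    have := (abs_le.1 (h x y)).1
    linarith
  have hbdd : BddAbove (range fun y => φ y - t * (1 + β * V y)) := by
    obtain ⟨x⟩ := ‹Nonempty X›
    exact ⟨φ x + t * (1 + β * V x), by rintro _ ⟨y, rfl⟩; exact key x y⟩
  refine ⟨⨆ y, (φ y - t * (1 + β * V y)), fun x => ?_⟩
  have h1 := le_ciSup hbdd x
  have h2 : (⨆ y, (φ y - t * (1 + β * V y))) ≤ φ x + t * (1 + β * V x) := ciSup_le (key x)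
  rw [abs_le]
  constructor <;> linarith

/-- If `η ≤ κ` and `|ψ| ≤ W`, then `κ ψ` and `η ψ` differ by at most `κ W - η W`. -/
lemma abs_integral_sub_le_of_measure_le {X : Type*} [MeasurableSpace X] {κ η : Measure X}
    (hle : η ≤ κ) {ψ W : X → ℝ} (hψ : Integrable ψ κ) (hW : Integrable W κ)
    (h : ∀ x, |ψ x| ≤ W x) :
    |∫ x, ψ x ∂κ - ∫ x, ψ x ∂η| ≤ ∫ x, W x ∂κ - ∫ x, W x ∂η := by
  have hψ' := hψ.mono_measure hle
  have hW' := hW.mono_measure hle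
  have h1 : ∫ x, (W x + ψ x) ∂η ≤ ∫ x, (W x + ψ x) ∂κ :=
    integral_mono_measure hle (ae_of_all _ fun x => by
      have := (abs_le.1 (h x)).1; simp only [Pi.zero_apply]; linarith) (hW.add hψ)
  have h2 : ∫ x, (W x - ψ x) ∂η ≤ ∫ x, (W x - ψ x) ∂κ :=
    integral_mono_measure hle (ae_of_all _ fun x => by
      have := (abs_le.1 (h x)).2; simp only [Pi.zero_apply]; linarith) (hW.sub hψ)
  rw [integral_add hW hψ, integral_add hW' hψ'] at h1
  rw [integral_sub hW hψ, integral_sub hW' hψ'] at h2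
  rw [abs_le]
  constructor <;> linarith

/-- Harris' theorem in the form of Hairer and Mattingly, for one step: a geometric drift towards
`{V ≤ 4B/δ}` and a minorization there by mass `ε` contract the oscillation seminorm with weight
`1 + (ε / 2B) V` by the factor `1 - εδ/4`. Far out the drift alone contracts; near the centre
the common component `η` cancels. -/
lemma harris_step {X : Type*} [MeasurableSpace X] [Nonempty X] (V : X → ℝ) (hV1 : ∀ x, 1 ≤ V x)
    (P : X → Measure X) (hP : ∀ x, IsProbabilityMeasure (P x)) (δ B ε : ℝ)
    (hδ0 : 0 < δ) (hδ1 : δ ≤ 1) (hB : 1 ≤ B) (hε0 : 0 < ε) (hε1 : ε ≤ 1)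
    (hint : ∀ x, Integrable V (P x))
    (hdrift : ∀ x, ∫ y, V y ∂(P x) ≤ (1 - δ) * V x + B)
    (η : Measure X) (hη : ε ≤ η.real univ)
    (hmin : ∀ x, V x ≤ 4 * B / δ → η ≤ P x)
    (t : ℝ) (ht : 0 ≤ t) (φ : X → ℝ) (hφ : Measurable φ)
    (hosc : ∀ x y, |φ x - φ y| ≤ t * (2 + ε / (2 * B) * V x + ε / (2 * B) * V y)) (x y : X) :
    |∫ z, φ z ∂(P x) - ∫ z, φ z ∂(P y)| ≤
      (1 - ε * δ / 4) * t * (2 + ε / (2 * B) * V x + ε / (2 * B) * V y) := by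
  set β := ε / (2 * B) with hβ
  have hβ0 : 0 < β := by positivity
  have hβB : β * B = ε / 2 := by rw [hβ]; field_simp
  obtain ⟨c, hc⟩ := exists_center φ V t β hosc
  have hWint : ∀ x, Integrable (fun z => t * (1 + β * V z)) (P x) := fun x =>
    ((integrable_const 1).add ((hint x).const_mul β)).const_mul t
  have hψint : ∀ x, Integrable (fun z => φ z - c) (P x) := fun x =>
    (hWint x).mono' (hφ.sub_const c).aestronglyMeasurable (ae_of_all _ hc)
  have hφint : ∀ x, Integrable φ (P x) := fun x => by
    simpa [Pi.add_def] using (hψint x).add (integrable_const c)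
  have hW : ∀ x, ∫ z, t * (1 + β * V z) ∂(P x) ≤ t * (1 + β * ((1 - δ) * V x + B)) := by
    intro x
    rw [integral_const_mul, integral_add (integrable_const _) ((hint x).const_mul β),
      integral_const_mul]
    simp only [integral_const, probReal_univ, smul_eq_mul, mul_one]
    have := hdrift x
    gcongr
  have hψeq : ∀ x, ∫ z, (φ z - c) ∂(P x) = ∫ z, φ z ∂(P x) - c := by
    intro x
    rw [integral_sub (hφint x) (integrable_const _)]
    simp
  have hrw : ∫ z, φ z ∂(P x) - ∫ z, φ z ∂(P y)
      = ∫ z, (φ z - c) ∂(P x) - ∫ z, (φ z - c) ∂(P y) := by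
    rw [hψeq, hψeq]; ring
  rw [hrw]
  have hVx := hV1 x
  have hVy := hV1 y
  set S := V x + V y with hS
  suffices h : |∫ z, (φ z - c) ∂(P x) - ∫ z, (φ z - c) ∂(P y)|
      ≤ t * ((1 - ε * δ / 4) * (2 + β * S)) by
    refine h.trans (le_of_eq ?_)
    rw [hS]; ring
  by_cases hcase : 4 * B / δ ≤ S
  · have hbd : ∀ x, |∫ z, (φ z - c) ∂(P x)| ≤ t * (1 + β * ((1 - δ) * V x + B)) := fun x =>
      (abs_integral_le_integral_abs).trans
        ((integral_mono (hψint x).abs (hWint x) hc).trans (hW x))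
    have h1 := (abs_sub _ _).trans (add_le_add (hbd x) (hbd y))
    refine h1.trans ?_
    rw [← mul_add]
    refine mul_le_mul_of_nonneg_left ?_ ht
    have h4 : 4 * B ≤ S * δ := (div_le_iff₀ hδ0).1 hcase
    have h5 : β * (4 * B) ≤ β * (S * δ) := mul_le_mul_of_nonneg_left h4 hβ0.le
    have h6 : ε * (β * (S * δ)) ≤ 1 * (β * (S * δ)) :=
      mul_le_mul_of_nonneg_right hε1 (by positivity)
    have h7 : ε * δ ≤ ε * 1 := mul_le_mul_of_nonneg_left hδ1 hε0.le
    have : 1 + β * ((1 - δ) * V x + B) + (1 + β * ((1 - δ) * V y + B))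
        = 2 + β * S - β * (S * δ) + 2 * (β * B) := by rw [hS]; ring
    rw [this]
    nlinarith
  · push Not at hcase
    have hbd : ∀ x, V x ≤ 4 * B / δ → |∫ z, (φ z - c) ∂(P x) - ∫ z, (φ z - c) ∂η|
        ≤ t * (1 + β * ((1 - δ) * V x + B) - ε) := by
      intro x hx
      have hle := hmin x hx
      have : IsFiniteMeasure η := isFiniteMeasure_of_le _ hle
      refine (abs_integral_sub_le_of_measure_le hle (hψint x) (hWint x) hc).trans ?_
      have h2 : t * ε ≤ ∫ z, t * (1 + β * V z) ∂η := by
        have : ∫ z, t ∂η ≤ ∫ z, t * (1 + β * V z) ∂η := by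
          refine integral_mono (integrable_const _) ((hWint x).mono_measure hle) fun z => ?_
          have := hV1 z
          have : 0 ≤ t * (β * V z) := by positivity
          simp only; linarith
        refine le_trans ?_ this
        rw [integral_const, smul_eq_mul, mul_comm]
        exact mul_le_mul_of_nonneg_right hη ht
      have := hW x
      linarith
    have hx := hbd x (by linarith)
    have hy := hbd y (by linarith)
    have h1 : |∫ z, (φ z - c) ∂(P x) - ∫ z, (φ z - c) ∂(P y)|
        ≤ t * (1 + β * ((1 - δ) * V x + B) - ε) + t * (1 + β * ((1 - δ) * V y + B) - ε) := by
      rw [abs_le] at hx hy ⊢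
      constructor <;> linarith [hx.1, hx.2, hy.1, hy.2]
    refine h1.trans ?_
    rw [← mul_add]
    refine mul_le_mul_of_nonneg_left ?_ ht
    have hS0 : 0 ≤ β * (S * δ) := by positivity
    have h6 : ε * (β * (S * δ)) ≤ 1 * (β * (S * δ)) := mul_le_mul_of_nonneg_right hε1 hS0
    have h7 : ε * δ ≤ ε * 1 := mul_le_mul_of_nonneg_left hδ1 hε0.le
    have : 1 + β * ((1 - δ) * V x + B) - ε + (1 + β * ((1 - δ) * V y + B) - ε)
        = 2 + β * S - β * (S * δ) + 2 * (β * B) - 2 * ε := by rw [hS]; ring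
    rw [this]
    nlinarith

/-! ### A perturbed contraction recursion -/

lemma tendsto_zero_of_contraction (a θ s : ℕ → ℝ) (ha : ∀ n, 0 ≤ a n)
    (hθ0 : ∀ n, 0 ≤ θ n) (hθ1 : ∀ n, θ n ≤ 1)
    (hrec : ∀ n, a (n + 1) ≤ (1 - θ n) * a n + θ n * s n)
    (hs : Filter.Tendsto s Filter.atTop (nhds 0))
    (hsum : Filter.Tendsto (fun n => ∑ i ∈ Finset.range n, θ i) Filter.atTop Filter.atTop) :
    Filter.Tendsto a Filter.atTop (nhds 0) := by
  rw [Metric.tendsto_atTop]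
  intro e he
  obtain ⟨N, hN⟩ := (Filter.eventually_atTop.1 (hs.eventually (gt_mem_nhds (half_pos he))))
  have hbd : ∀ k, a (N + k) ≤ e / 2 +
      Real.exp (-(∑ i ∈ Finset.range (N + k), θ i)) *
        (Real.exp (∑ i ∈ Finset.range N, θ i) * a N) := by
    intro k
    induction k with
    | zero =>
      rw [Nat.add_zero, ← mul_assoc, ← Real.exp_add]
      simp; linarith
    | succ k ih =>
      set E := Real.exp (∑ i ∈ Finset.range N, θ i) * a N with hE
      have hE0 : 0 ≤ E := mul_nonneg (Real.exp_pos _).le (ha N)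
      rw [← add_assoc, Finset.sum_range_succ, neg_add, Real.exp_add]
      set G := Real.exp (-(∑ i ∈ Finset.range (N + k), θ i)) with hG
      have hG0 : 0 < G := Real.exp_pos _
      have h1 := hrec (N + k)
      have h2 := hN (N + k) (by omega)
      have h3 : 1 - θ (N + k) ≤ Real.exp (-θ (N + k)) := by
        have := Real.add_one_le_exp (-θ (N + k)); linarith
      have h4 := hθ0 (N + k)
      have h5 := hθ1 (N + k)
      have h6 : (1 - θ (N + k)) * a (N + k) ≤ (1 - θ (N + k)) * (e / 2 + G * E) :=
        mul_le_mul_of_nonneg_left ih (by linarith)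
      have h7 : θ (N + k) * s (N + k) ≤ θ (N + k) * (e / 2) :=
        mul_le_mul_of_nonneg_left h2.le h4
      have h8 : (1 - θ (N + k)) * (G * E) ≤ Real.exp (-θ (N + k)) * (G * E) :=
        mul_le_mul_of_nonneg_right h3 (by positivity)
      nlinarith
  have hlim : Filter.Tendsto (fun n => Real.exp (-(∑ i ∈ Finset.range n, θ i)) *
        (Real.exp (∑ i ∈ Finset.range N, θ i) * a N)) Filter.atTop (nhds 0) := by
    have := (Real.tendsto_exp_neg_atTop_nhds_zero.comp hsum).mul_const
      (Real.exp (∑ i ∈ Finset.range N, θ i) * a N)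
    simpa using this
  obtain ⟨M, hM⟩ := (Filter.eventually_atTop.1 (hlim.eventually (gt_mem_nhds (half_pos he))))
  refine ⟨max N M, fun n hn => ?_⟩
  have h1 := hM n (le_trans (le_max_right _ _) hn)
  obtain ⟨k, rfl⟩ := Nat.exists_eq_add_of_le (le_trans (le_max_left _ _) hn)
  have h2 := hbd k
  rw [Real.dist_eq, sub_zero, abs_of_nonneg (ha _)]
  linarith

/-! ### Inhomogeneous chains with uniform drift and decaying minorization -/

lemma integral_bind_kernel {X : Type*} [MeasurableSpace X] (κ : Kernel X X) [IsMarkovKernel κ]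
    (μ : Measure X) [IsProbabilityMeasure μ] {φ : X → ℝ}
    (h : Integrable φ (μ.bind (fun x => κ x))) :
    ∫ x, φ x ∂(μ.bind (fun x => κ x)) = ∫ x, ∫ y, φ y ∂(κ x) ∂μ := by
  have e : μ.bind (fun x => κ x) = (κ ∘ₖ Kernel.const Unit μ) () := by
    rw [← Measure.comp_eq_comp_const_apply]
  rw [e] at h ⊢
  rw [Kernel.integral_comp h]
  simp

lemma isProbabilityMeasure_bind_kernel {X : Type*} [MeasurableSpace X] (κ : Kernel X X)
    [IsMarkovKernel κ] (μ : Measure X) [IsProbabilityMeasure μ] :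
    IsProbabilityMeasure (μ.bind (fun x => κ x)) :=
  inferInstanceAs (IsProbabilityMeasure (κ ∘ₘ μ))

lemma isProbabilityMeasure_iterMeasNH {X : Type*} [MeasurableSpace X] (P : ℕ → Kernel X X)
    (hP : ∀ n, IsMarkovKernel (P n)) (μ : Measure X) [IsProbabilityMeasure μ] (n : ℕ) :
    IsProbabilityMeasure (iterMeasNH P μ n) := by
  induction n with
  | zero => exact ‹_›
  | succ n ih =>
    have := hP (n + 1)
    exact isProbabilityMeasure_bind_kernel (P (n + 1)) (iterMeasNH P μ n)

lemma integrable_bind_of_drift {X : Type*} [MeasurableSpace X] (V : X → ℝ) (hVm : Measurable V)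
    (hV1 : ∀ x, 1 ≤ V x) (κ : Kernel X X) [IsMarkovKernel κ] (δ B : ℝ) (hδ0 : 0 < δ)
    (hint : ∀ x, Integrable V (κ x)) (hdrift : ∀ x, ∫ y, V y ∂(κ x) ≤ (1 - δ) * V x + B)
    (μ : Measure X) [IsProbabilityMeasure μ] (hμ : Integrable V μ) :
    Integrable V (μ.bind (fun x => κ x)) := by
  have h0 : ∀ x, 0 ≤ V x := fun x => zero_le_one.trans (hV1 x)
  refine (Measure.integrable_comp_iff (κ := κ) (μ := μ) hVm.aestronglyMeasurable).2
    ⟨ae_of_all _ hint, ?_⟩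
  refine (hμ.add (integrable_const B)).mono'
    (StronglyMeasurable.integral_kernel hVm.norm.stronglyMeasurable).aestronglyMeasurable
    (ae_of_all _ fun x => ?_)
  have e : ∫ y, ‖V y‖ ∂(κ x) = ∫ y, V y ∂(κ x) := by
    congr 1; ext y; exact Real.norm_of_nonneg (h0 y)
  rw [e, Real.norm_of_nonneg (integral_nonneg h0)]
  have := hdrift x
  have : 0 ≤ δ * V x := mul_nonneg hδ0.le (h0 x)
  simp only [Pi.add_apply]
  linarith

/-- Convergence towards the moving invariant measures `π n`, for initial measures integrating `V`.
The minorization mass `ε n` may vanish, as long as its sum diverges and it dominates the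
variation `r n` between consecutive invariant measures. -/
lemma chain_tendsto_of_integrable {X : Type*} [MeasurableSpace X] [Nonempty X] (V : X → ℝ)
    (hVm : Measurable V)
    (hV1 : ∀ x, 1 ≤ V x) (P : ℕ → Kernel X X) (hP : ∀ n, IsMarkovKernel (P n))
    (π : ℕ → Measure X) (hπ : ∀ n, IsProbabilityMeasure (π n))
    (hinv : ∀ n, (π n).bind (fun x => P n x) = π n) (hπV : ∀ n, Integrable V (π n))
    (δ B : ℝ) (hδ0 : 0 < δ) (hδ1 : δ ≤ 1) (hB : 1 ≤ B)
    (hint : ∀ n x, Integrable V (P n x))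
    (hdrift : ∀ n x, ∫ y, V y ∂(P n x) ≤ (1 - δ) * V x + B)
    (ε : ℕ → ℝ) (hε0 : ∀ n, 0 < ε n) (hε1 : ∀ n, ε n ≤ 1) (hεanti : Antitone ε)
    (η : ℕ → Measure X) (hη : ∀ n, ε n ≤ (η n).real univ)
    (hmin : ∀ n x, V x ≤ 4 * B / δ → η n ≤ P n x)
    (r : ℕ → ℝ) (hr0 : ∀ n, 0 ≤ r n)
    (hr : ∀ n t, 0 ≤ t → ∀ φ : X → ℝ, Measurable φ → (∀ x, |φ x| ≤ t * (2 * V x)) →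
      |∫ x, φ x ∂(π n) - ∫ x, φ x ∂(π (n + 1))| ≤ t * r n)
    (hlim : Filter.Tendsto (fun n => r n / ε (n + 1)) Filter.atTop (nhds 0))
    (hsum : Filter.Tendsto (fun n => ∑ i ∈ Finset.range n, ε (i + 1)) Filter.atTop Filter.atTop)
    (μ : Measure X) [IsProbabilityMeasure μ] (hμV : Integrable V μ) :
    ∃ a : ℕ → ℝ, Filter.Tendsto a Filter.atTop (nhds 0) ∧
      ∀ n, ∀ φ : X → ℝ, Measurable φ → (∀ x, |φ x| ≤ 1) →
        |∫ x, φ x ∂(iterMeasNH P μ n) - ∫ x, φ x ∂(π n)| ≤ a n := by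
  have h0 : ∀ x, 0 ≤ V x := fun x => zero_le_one.trans (hV1 x)
  have hprob := fun n => isProbabilityMeasure_iterMeasNH P hP μ n
  have hVn : ∀ n, Integrable V (iterMeasNH P μ n) := by
    intro n
    induction n with
    | zero => exact hμV
    | succ n ih =>
      exact integrable_bind_of_drift V hVm hV1 (P (n + 1)) δ B hδ0 (hint _) (hdrift _)
        (iterMeasNH P μ n) ih
  have hβ0 : ∀ n, 0 ≤ ε n / (2 * B) := fun n => by have := hε0 n; positivity
  have hβ1 : ∀ n, ε n / (2 * B) ≤ 1 := fun n => by
    rw [div_le_one (by positivity)]; linarith [hε1 n]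
  have hcenter : ∀ n t, 0 ≤ t → ∀ φ : X → ℝ,
      (∀ x y, |φ x - φ y| ≤ t * (2 + ε n / (2 * B) * V x + ε n / (2 * B) * V y)) →
      ∃ c : ℝ, ∀ x, |φ x - c| ≤ t * (2 * V x) := by
    intro n t ht φ hosc
    obtain ⟨c, hc⟩ := exists_center φ V t _ hosc
    refine ⟨c, fun x => (hc x).trans ?_⟩
    have := mul_le_mul_of_nonneg_right (hβ1 n) (h0 x)
    have := hV1 x
    gcongr
    linarith
  have hphi : ∀ (t c : ℝ) (φ : X → ℝ), Measurable φ → (∀ x, |φ x - c| ≤ t * (2 * V x)) →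
      ∀ ν : Measure X, IsProbabilityMeasure ν → Integrable V ν →
        Integrable φ ν ∧ ∫ x, (φ x - c) ∂ν = ∫ x, φ x ∂ν - c := by
    intro t c φ hφ hc ν hν hVν
    have h1 : Integrable (fun x => φ x - c) ν :=
      ((hVν.const_mul 2).const_mul t).mono' (hφ.sub_const c).aestronglyMeasurable
        (ae_of_all _ hc)
    have h2 : Integrable φ ν := by
      simpa [Pi.add_def] using h1.add (integrable_const c)
    refine ⟨h2, ?_⟩
    rw [integral_sub h2 (integrable_const _)]
    simp
  let a : ℕ → ℝ := fun n => Nat.rec (2 * ∫ x, V x ∂μ + 2 * ∫ x, V x ∂(π 0))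
    (fun n an => (1 - ε (n + 1) * δ / 4) * (an + r n)) n
  have ha0 : a 0 = 2 * ∫ x, V x ∂μ + 2 * ∫ x, V x ∂(π 0) := rfl
  have ha1 : ∀ n, a (n + 1) = (1 - ε (n + 1) * δ / 4) * (a n + r n) := fun n => rfl
  have hθ : ∀ n, 0 < ε n * δ / 4 ∧ ε n * δ / 4 ≤ 1 := by
    intro n
    have h1 := hε0 n
    have h2 := mul_le_mul (hε1 n) hδ1 hδ0.le zero_le_one
    exact ⟨by positivity, by linarith⟩
  have hapos : ∀ n, 0 ≤ a n := by
    intro n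
    induction n with
    | zero =>
      rw [ha0]
      have h1 : 0 ≤ ∫ x, V x ∂μ := integral_nonneg h0
      have h2 : 0 ≤ ∫ x, V x ∂(π 0) := integral_nonneg h0
      positivity
    | succ n ih =>
      rw [ha1]
      exact mul_nonneg (by linarith [(hθ (n + 1)).2]) (add_nonneg ih (hr0 n))
  have hmain : ∀ n t, 0 ≤ t → ∀ φ : X → ℝ, Measurable φ →
      (∀ x y, |φ x - φ y| ≤ t * (2 + ε n / (2 * B) * V x + ε n / (2 * B) * V y)) →
      |∫ x, φ x ∂(iterMeasNH P μ n) - ∫ x, φ x ∂(π n)| ≤ t * a n := by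
    intro n
    induction n with
    | zero =>
      intro t ht φ hφ hosc
      obtain ⟨c, hc⟩ := hcenter 0 t ht φ hosc
      have h1 := hphi t c φ hφ hc μ ‹_› hμV
      have h2 := hphi t c φ hφ hc (π 0) (hπ 0) (hπV 0)
      have hb : ∀ ν : Measure X, Integrable V ν →
          |∫ x, (φ x - c) ∂ν| ≤ t * (2 * ∫ x, V x ∂ν) := by
        intro ν hVν
        rw [← integral_const_mul, ← integral_const_mul]
        exact norm_integral_le_of_norm_le (f := fun x => φ x - c)
          ((hVν.const_mul 2).const_mul t) (ae_of_all _ hc)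
      have b1 := hb μ hμV
      have b2 := hb (π 0) (hπV 0)
      rw [h1.2] at b1
      rw [h2.2] at b2
      rw [ha0]
      change |∫ x, φ x ∂μ - ∫ x, φ x ∂(π 0)| ≤ _
      rw [abs_le] at *
      constructor <;> linarith [b1.1, b1.2, b2.1, b2.2]
    | succ n ih =>
      intro t ht φ hφ hosc
      obtain ⟨c, hc⟩ := hcenter (n + 1) t ht φ hosc
      have e1 : ∫ x, φ x ∂(iterMeasNH P μ (n + 1))
          = ∫ x, ∫ y, φ y ∂(P (n + 1) x) ∂(iterMeasNH P μ n) :=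
        integral_bind_kernel (P (n + 1)) (iterMeasNH P μ n)
          (hphi t c φ hφ hc (iterMeasNH P μ (n + 1)) (hprob _) (hVn _)).1
      have e2 : ∫ x, φ x ∂(π (n + 1)) = ∫ x, ∫ y, φ y ∂(P (n + 1) x) ∂(π (n + 1)) := by
        have h := hphi t c φ hφ hc (π (n + 1)) (hπ _) (hπV _)
        conv_lhs => rw [← hinv (n + 1)]
        apply integral_bind_kernel
        rw [hinv]
        exact h.1
      have hψm : Measurable fun x => ∫ y, φ y ∂(P (n + 1) x) :=
        (StronglyMeasurable.integral_kernel hφ.stronglyMeasurable).measurable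
      have hψosc := harris_step V hV1 (fun x => P (n + 1) x) (fun x => inferInstance) δ B
        (ε (n + 1)) hδ0 hδ1 hB (hε0 _) (hε1 _) (hint (n + 1)) (hdrift (n + 1)) (η (n + 1))
        (hη _) (hmin (n + 1)) t ht φ hφ hosc
      rw [e1, e2]
      set ψ : X → ℝ := fun x => ∫ y, φ y ∂(P (n + 1) x) with hψ
      have ht' : 0 ≤ (1 - ε (n + 1) * δ / 4) * t :=
        mul_nonneg (by linarith [(hθ (n + 1)).2]) ht
      obtain ⟨c', hc'⟩ := hcenter (n + 1) _ ht' ψ hψosc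
      have s1 : |∫ x, ψ x ∂(iterMeasNH P μ n) - ∫ x, ψ x ∂(π n)|
          ≤ (1 - ε (n + 1) * δ / 4) * t * a n := by
        refine ih _ ht' ψ hψm fun x y => (hψosc x y).trans ?_
        have := hεanti (Nat.le_succ n)
        have := h0 x
        have := h0 y
        gcongr
      have s2 : |∫ x, ψ x ∂(π n) - ∫ x, ψ x ∂(π (n + 1))|
          ≤ (1 - ε (n + 1) * δ / 4) * t * r n := by
        have h := hr n _ ht' (fun x => ψ x - c') (hψm.sub_const c') hc'
        rw [(hphi _ c' ψ hψm hc' (π n) (hπ _) (hπV _)).2,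
          (hphi _ c' ψ hψm hc' (π (n + 1)) (hπ _) (hπV _)).2] at h
        simpa using h
      rw [ha1]
      rw [abs_le] at *
      constructor <;> linarith [s1.1, s1.2, s2.1, s2.2]
  refine ⟨a, ?_, fun n φ hφ hφ1 => ?_⟩
  · refine tendsto_zero_of_contraction a (fun n => ε (n + 1) * δ / 4)
      (fun n => 4 / δ * (r n / ε (n + 1))) hapos (fun n => (hθ _).1.le) (fun n => (hθ _).2)
      (fun n => ?_) (by simpa using hlim.const_mul (4 / δ)) ?_
    · have h1 : ε (n + 1) * δ / 4 * (4 / δ * (r n / ε (n + 1))) = r n := by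
        have := (hε0 (n + 1)).ne'
        field_simp
      simp only [h1]
      rw [ha1, mul_add]
      have := mul_nonneg (hθ (n + 1)).1.le (hr0 n)
      linarith
    · have := hsum.atTop_mul_const (show 0 < δ / 4 by positivity)
      refine this.congr fun n => ?_
      rw [Finset.sum_mul]
      exact Finset.sum_congr rfl fun i _ => by ring
  · have := hmain n 1 zero_le_one φ hφ fun x y => by
      have h1 := abs_sub (φ x) (φ y)
      have h2 := hφ1 x
      have h3 := hφ1 y
      have h4 := mul_nonneg (hβ0 n) (h0 x)
      have h5 := mul_nonneg (hβ0 n) (h0 y)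
      linarith
    simpa using this

/-- Markov steps do not increase the total variation distance of two initial measures. -/
lemma iterMeasNH_diff_le {X : Type*} [MeasurableSpace X] (P : ℕ → Kernel X X)
    (hP : ∀ n, IsMarkovKernel (P n)) (μ ν : Measure X) [IsProbabilityMeasure μ]
    [IsProbabilityMeasure ν] (e : ℝ)
    (h : ∀ φ : X → ℝ, Measurable φ → (∀ x, |φ x| ≤ 1) → |∫ x, φ x ∂μ - ∫ x, φ x ∂ν| ≤ e)
    (n : ℕ) (φ : X → ℝ) (hφ : Measurable φ) (hφ1 : ∀ x, |φ x| ≤ 1) :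
    |∫ x, φ x ∂(iterMeasNH P μ n) - ∫ x, φ x ∂(iterMeasNH P ν n)| ≤ e := by
  induction n generalizing φ with
  | zero => exact h φ hφ hφ1
  | succ n ih =>
    have hb : ∀ (ρ : Measure X), IsProbabilityMeasure ρ → Integrable φ ρ := fun ρ _ =>
      (integrable_const (1 : ℝ)).mono' hφ.aestronglyMeasurable (ae_of_all _ hφ1)
    have h1 := isProbabilityMeasure_iterMeasNH P hP μ n
    have h2 := isProbabilityMeasure_iterMeasNH P hP ν n
    have e1 : ∫ x, φ x ∂(iterMeasNH P μ (n + 1))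
        = ∫ x, ∫ y, φ y ∂(P (n + 1) x) ∂(iterMeasNH P μ n) :=
      integral_bind_kernel _ _ (hb _ (isProbabilityMeasure_iterMeasNH P hP μ (n + 1)))
    have e2 : ∫ x, φ x ∂(iterMeasNH P ν (n + 1))
        = ∫ x, ∫ y, φ y ∂(P (n + 1) x) ∂(iterMeasNH P ν n) :=
      integral_bind_kernel _ _ (hb _ (isProbabilityMeasure_iterMeasNH P hP ν (n + 1)))
    rw [e1, e2]
    refine ih _ (StronglyMeasurable.integral_kernel hφ.stronglyMeasurable).measurable fun x => ?_
    have := norm_integral_le_of_norm_le_const (μ := P (n + 1) x) (f := φ) (C := 1)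
      (ae_of_all _ hφ1)
    simpa using this

/-- Any probability measure is total-variation close to one integrating `V`: condition it on a
large sublevel set of `V`. -/
lemma exists_integrable_approx {X : Type*} [MeasurableSpace X] (V : X → ℝ) (hVm : Measurable V)
    (hV1 : ∀ x, 1 ≤ V x) (μ : Measure X) [IsProbabilityMeasure μ] (e : ℝ) (he : 0 < e) :
    ∃ ν : Measure X, IsProbabilityMeasure ν ∧ Integrable V ν ∧
      ∀ φ : X → ℝ, Measurable φ → (∀ x, |φ x| ≤ 1) → |∫ x, φ x ∂μ - ∫ x, φ x ∂ν| ≤ e := by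
  have hlim : Filter.Tendsto (fun n : ℕ => μ.real {x | V x ≤ n}) Filter.atTop (nhds 1) := by
    have h1 := tendsto_measure_iUnion_atTop (μ := μ) (s := fun n : ℕ => {x | V x ≤ n})
      (fun m n hmn x hx => le_trans (show V x ≤ m from hx) (by exact_mod_cast hmn))
    have h2 : (⋃ n : ℕ, {x | V x ≤ n}) = univ := by
      ext x; simpa using exists_nat_ge (V x)
    rw [h2, measure_univ] at h1
    simpa [measureReal_def, Function.comp_def] using
      (ENNReal.tendsto_toReal ENNReal.one_ne_top).comp h1
  obtain ⟨N, hN1, hN2⟩ := ((hlim.eventually (lt_mem_nhds (show 1 - e / 2 < 1 by linarith))).and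
    (hlim.eventually (lt_mem_nhds (show (0 : ℝ) < 1 by norm_num)))).exists
  set S : Set X := {x | V x ≤ N} with hS
  have hSm : MeasurableSet S := measurableSet_le hVm measurable_const
  have hS0 : μ S ≠ 0 := fun h => by simp [measureReal_def, h] at hN2
  have hpr : IsProbabilityMeasure (ProbabilityTheory.cond μ S) := cond_isProbabilityMeasure hS0
  refine ⟨ProbabilityTheory.cond μ S, hpr, ?_, fun φ hφ hφ1 => ?_⟩
  · refine (integrable_const (N : ℝ)).mono' hVm.aestronglyMeasurable ?_
    filter_upwards [ae_cond_mem hSm] with x hx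
    rw [Real.norm_of_nonneg (zero_le_one.trans (hV1 x))]
    exact hx
  · have hφi : Integrable φ μ :=
      (integrable_const (1 : ℝ)).mono' hφ.aestronglyMeasurable (ae_of_all _ hφ1)
    have e1 : ∫ x, φ x ∂(ProbabilityTheory.cond μ S) = (μ.real S)⁻¹ * ∫ x in S, φ x ∂μ := by
      rw [ProbabilityTheory.cond, integral_smul_measure, ENNReal.toReal_inv]
      rfl
    rw [e1, ← integral_add_compl hSm hφi]
    have b1 : |∫ x in S, φ x ∂μ| ≤ μ.real S := by
      have := norm_setIntegral_le_of_norm_le_const (μ := μ) (s := S) (f := φ) (C := 1)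
        (measure_lt_top _ _) (fun x _ => hφ1 x)
      simpa using this
    have b2 : |∫ x in Sᶜ, φ x ∂μ| ≤ 1 - μ.real S := by
      have := norm_setIntegral_le_of_norm_le_const (μ := μ) (s := Sᶜ) (f := φ) (C := 1)
        (measure_lt_top _ _) (fun x _ => hφ1 x)
      rw [probReal_compl_eq_one_sub hSm] at this
      simpa using this
    set m := μ.real S
    have hm1 : m ≤ 1 := measureReal_le_one
    set I := ∫ x in S, φ x ∂μ
    set J := ∫ x in Sᶜ, φ x ∂μ
    have b3 : |I - m⁻¹ * I| ≤ 1 - m := by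
      have : I - m⁻¹ * I = -((m⁻¹ - 1) * I) := by ring
      rw [this, abs_neg, abs_mul, abs_of_nonneg (by
        have := (one_le_inv₀ hN2).2 hm1; linarith)]
      have h3 : 0 ≤ m⁻¹ - 1 := by have := (one_le_inv₀ hN2).2 hm1; linarith
      calc (m⁻¹ - 1) * |I| ≤ (m⁻¹ - 1) * m := mul_le_mul_of_nonneg_left b1 h3
        _ = 1 - m := by field_simp
    have : I + J - m⁻¹ * I = (I - m⁻¹ * I) + J := by ring
    rw [this]
    exact (abs_add_le _ _).trans (by linarith)

/-! ### The logarithmic schedule -/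

/-- The factor `6 D` in the schedule makes `exp (3 D γ)` grow at most like `√n`, whereas the
increments of `γ` are of order `1 / n`. -/
lemma schedule_props (D γbar ξ : ℝ) (hD : 0 < D) (hξ : 0 ≤ ξ) (γ : ℕ → ℝ)
    (hγ : ∀ n : ℕ, γ n = Real.log (n + 1) / (6 * D * (1 + ξ)) + γbar) :
    (∀ n, γbar ≤ γ n) ∧ Monotone γ ∧
    Filter.Tendsto (fun n => (γ (n + 1) - γ n) * Real.exp (3 * D * γ (n + 1)))
      Filter.atTop (nhds 0) ∧
    Filter.Tendsto (fun n => ∑ i ∈ Finset.range n, Real.exp (-D * γ (i + 1)))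
      Filter.atTop Filter.atTop := by
  have hden : 0 < 6 * D * (1 + ξ) := by positivity
  have hden' : 6 * D ≤ 6 * D * (1 + ξ) := le_mul_of_one_le_right (by positivity) (by linarith)
  have hlog : ∀ n : ℕ, 0 ≤ Real.log (n + 1) := fun n =>
    Real.log_nonneg (by have : (0 : ℝ) ≤ n := n.cast_nonneg; linarith)
  have hmono : Monotone γ := by
    intro m n hmn
    rw [hγ, hγ]
    gcongr
  have hkey : ∀ n : ℕ, D * γ n ≤ Real.log (n + 1) / 6 + D * γbar := by
    intro n
    rw [hγ, mul_add]
    have : D * (Real.log (n + 1) / (6 * D * (1 + ξ))) ≤ Real.log (n + 1) / 6 := by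
      calc D * (Real.log (n + 1) / (6 * D * (1 + ξ)))
          ≤ D * (Real.log (n + 1) / (6 * D)) := by
            gcongr
            exact hlog n
        _ = Real.log (n + 1) / 6 := by field_simp
    linarith
  refine ⟨fun n => ?_, hmono, ?_, ?_⟩
  · rw [hγ]
    have := div_nonneg (hlog n) hden.le
    linarith
  · have hub : ∀ n : ℕ, (γ (n + 1) - γ n) * Real.exp (3 * D * γ (n + 1))
        ≤ (2 * Real.exp (3 * D * γbar) / (6 * D)) * (Real.sqrt ((n : ℝ) + 1))⁻¹ := by
      intro n
      have hn : (0 : ℝ) < (n : ℝ) + 1 := by positivity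
      have h1 : γ (n + 1) - γ n ≤ 1 / (6 * D) * (1 / ((n : ℝ) + 1)) := by
        have h2 : Real.log ((n : ℝ) + 1 + 1) - Real.log ((n : ℝ) + 1) ≤ 1 / ((n : ℝ) + 1) := by
          rw [← Real.log_div (by positivity) (by positivity)]
          refine (Real.log_le_sub_one_of_pos (by positivity)).trans (le_of_eq ?_)
          field_simp; ring
        have h3 : 0 ≤ Real.log ((n : ℝ) + 1 + 1) - Real.log ((n : ℝ) + 1) :=
          sub_nonneg.2 (Real.log_le_log hn (by linarith))
        rw [hγ, hγ]
        push_cast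
        calc Real.log ((n : ℝ) + 1 + 1) / (6 * D * (1 + ξ)) + γbar
              - (Real.log ((n : ℝ) + 1) / (6 * D * (1 + ξ)) + γbar)
            = (Real.log ((n : ℝ) + 1 + 1) - Real.log ((n : ℝ) + 1)) / (6 * D * (1 + ξ)) := by ring
          _ ≤ (Real.log ((n : ℝ) + 1 + 1) - Real.log ((n : ℝ) + 1)) / (6 * D) := by gcongr
          _ ≤ (1 / ((n : ℝ) + 1)) / (6 * D) := by gcongr
          _ = _ := by ring
      have h4 : Real.exp (3 * D * γ (n + 1))
          ≤ Real.exp (3 * D * γbar) * (2 * Real.sqrt ((n : ℝ) + 1)) := by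
        have h5 := hkey (n + 1)
        push_cast at h5
        calc Real.exp (3 * D * γ (n + 1))
            ≤ Real.exp (3 * D * γbar + Real.log ((n : ℝ) + 1 + 1) / 2) := by
              apply Real.exp_le_exp.2; linarith
          _ = Real.exp (3 * D * γbar) * Real.sqrt ((n : ℝ) + 1 + 1) := by
              rw [Real.exp_add, ← Real.log_sqrt (by positivity), Real.exp_log (by positivity)]
          _ ≤ _ := by
              gcongr
              rw [Real.sqrt_le_left (by positivity), mul_pow, Real.sq_sqrt hn.le]
              have : (0 : ℝ) ≤ n := n.cast_nonneg
              linarith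
      calc _ ≤ (1 / (6 * D) * (1 / ((n : ℝ) + 1))) *
            (Real.exp (3 * D * γbar) * (2 * Real.sqrt ((n : ℝ) + 1))) := by
              gcongr
        _ = _ := by
              have hs : Real.sqrt ((n : ℝ) + 1) ≠ 0 := by positivity
              have hs2 : (n : ℝ) + 1 = Real.sqrt ((n : ℝ) + 1) * Real.sqrt ((n : ℝ) + 1) :=
                (Real.mul_self_sqrt hn.le).symm
              set s := Real.sqrt ((n : ℝ) + 1)
              rw [hs2]
              field_simp
    refine squeeze_zero (fun n => mul_nonneg (sub_nonneg.2 (hmono (Nat.le_succ n)))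
      (Real.exp_pos _).le) hub ?_
    have h1 : Filter.Tendsto (fun n : ℕ => Real.sqrt ((n : ℝ) + 1)) Filter.atTop Filter.atTop :=
      Real.tendsto_sqrt_atTop.comp
        (Filter.tendsto_atTop_add_const_right _ _ tendsto_natCast_atTop_atTop)
    simpa using (h1.inv_tendsto_atTop).const_mul (2 * Real.exp (3 * D * γbar) / (6 * D))
  · have h1 := Real.tendsto_sum_range_one_div_nat_succ_atTop.const_mul_atTop
      (show 0 < Real.exp (-D * γbar) / 2 by positivity)
    refine Filter.tendsto_atTop_mono (fun n => ?_) h1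
    rw [Finset.mul_sum]
    refine Finset.sum_le_sum fun i _ => ?_
    have h5 := hkey (i + 1)
    have h6 := hlog (i + 1)
    push_cast at h5 h6
    have hi : (0 : ℝ) ≤ i := i.cast_nonneg
    calc Real.exp (-D * γbar) / 2 * (1 / ((i : ℝ) + 1))
        ≤ Real.exp (-D * γbar) * ((i : ℝ) + 1 + 1)⁻¹ := by
          rw [div_mul_div_comm, mul_one, div_eq_mul_inv]
          gcongr
          linarith
      _ = Real.exp (-D * γbar + -Real.log ((i : ℝ) + 1 + 1)) := by
          rw [Real.exp_add, Real.exp_neg (Real.log _), Real.exp_log (by positivity)]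
      _ ≤ _ := by
          apply Real.exp_le_exp.2; linarith

/-! ### The Metropolis–Hastings kernel -/

lemma exists_linear_lower_bound (f : ℝ → ℝ) (hf : Continuous f) (α x₁ : ℝ) (hα : 0 < α)
    (hgrow1 : ∀ x y : ℝ, x₁ ≤ x → x ≤ y → α * (y - x) ≤ f y - f x)
    (hgrow2 : ∀ x y : ℝ, x ≤ -x₁ → y ≤ x → α * (x - y) ≤ f y - f x) :
    ∃ m₀ : ℝ, ∀ x, m₀ + α * |x| ≤ f x := by
  have hX : x₁ ≤ |x₁| := le_abs_self _
  have hX0 : 0 ≤ |x₁| := abs_nonneg _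
  set X := |x₁|
  obtain ⟨L, hL⟩ := (isCompact_Icc (a := -X) (b := X)).bddBelow_image hf.continuousOn
  have hL' : ∀ x, -X ≤ x → x ≤ X → L ≤ f x := fun x h1 h2 => hL ⟨x, ⟨h1, h2⟩, rfl⟩
  refine ⟨L - α * X, fun x => ?_⟩
  rcases le_total x (-X) with h | h
  · have h1 := hgrow2 (-X) x (by linarith) h
    have h2 := hL' (-X) le_rfl (by linarith)
    rw [abs_of_nonpos (by linarith)]
    linarith
  · rcases le_total x X with h' | h'
    · have h1 := hL' x h h'
      have h2 : α * |x| ≤ α * X := mul_le_mul_of_nonneg_left (abs_le.2 ⟨h, h'⟩) hα.le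
      linarith
    · have h1 := hgrow1 X x hX h'
      have h2 := hL' X (by linarith) le_rfl
      rw [abs_of_nonneg (by linarith)]
      linarith

lemma measurable_accept (f q : ℝ → ℝ) (hf : Continuous f) (hq : Continuous q) (γ : ℝ) :
    Measurable (fun p : ℝ × ℝ =>
      ENNReal.ofReal (min 1 (Real.exp (-γ * (f p.2 - f p.1))) * q (p.2 - p.1))) := by
  have : Continuous (fun p : ℝ × ℝ =>
      min 1 (Real.exp (-γ * (f p.2 - f p.1))) * q (p.2 - p.1)) := by fun_prop
  exact this.measurable.ennreal_ofReal

lemma measurable_reject (f q : ℝ → ℝ) (hf : Continuous f) (hq : Continuous q) (γ : ℝ) :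
    Measurable (fun p : ℝ × ℝ =>
      ENNReal.ofReal ((1 - min 1 (Real.exp (-γ * (f p.2 - f p.1)))) * q (p.2 - p.1))) := by
  have : Continuous (fun p : ℝ × ℝ =>
      (1 - min 1 (Real.exp (-γ * (f p.2 - f p.1)))) * q (p.2 - p.1)) := by fun_prop
  exact this.measurable.ennreal_ofReal

lemma lintegral_rwmKernel (f q : ℝ → ℝ) (hf : Continuous f) (hq : Continuous q)
    (hq0 : ∀ y, 0 < q y) (γ x : ℝ) (h : ℝ → ℝ) (hm : Measurable h) (h0 : ∀ y, 0 ≤ h y) :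
    ∫⁻ y, ENNReal.ofReal (h y) ∂(rwmKernel f q γ x) =
      ∫⁻ y, ENNReal.ofReal ((min 1 (Real.exp (-γ * (f y - f x))) * h y
        + (1 - min 1 (Real.exp (-γ * (f y - f x)))) * h x) * q (y - x)) := by
  have m1 := (measurable_accept f q hf hq γ).comp (measurable_prodMk_left (x := x))
  have m2 := (measurable_reject f q hf hq γ).comp (measurable_prodMk_left (x := x))
  simp only [Function.comp_def] at m1 m2
  rw [rwmKernel, lintegral_add_measure, lintegral_smul_measure,
    lintegral_dirac' _ hm.ennreal_ofReal,
    lintegral_withDensity_eq_lintegral_mul _ m1 hm.ennreal_ofReal, smul_eq_mul,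
    ← lintegral_mul_const _ m2, ← lintegral_add_left (m1.mul hm.ennreal_ofReal)]
  refine lintegral_congr fun y => ?_
  have h1 : 0 ≤ min 1 (Real.exp (-γ * (f y - f x))) := le_min zero_le_one (Real.exp_pos _).le
  have h2 : 0 ≤ 1 - min 1 (Real.exp (-γ * (f y - f x))) := sub_nonneg.2 (min_le_left _ _)
  have h3 := (hq0 (y - x)).le
  simp only [Pi.mul_apply]
  rw [← ENNReal.ofReal_mul (mul_nonneg h1 h3), ← ENNReal.ofReal_mul (mul_nonneg h2 h3),
    ← ENNReal.ofReal_add (mul_nonneg (mul_nonneg h1 h3) (h0 y))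
      (mul_nonneg (mul_nonneg h2 h3) (h0 x))]
  congr 1
  ring

lemma isProbabilityMeasure_rwmKernel (f q : ℝ → ℝ) (hf : Continuous f) (hq : Continuous q)
    (hq0 : ∀ y, 0 < q y) (hqint : ∫ y, q y = 1) (γ x : ℝ) :
    IsProbabilityMeasure (rwmKernel f q γ x) := by
  constructor
  have h := lintegral_rwmKernel f q hf hq hq0 γ x (fun _ => 1) measurable_const
    (fun _ => zero_le_one)
  simp only [ENNReal.ofReal_one, lintegral_one, mul_one, add_sub_cancel, one_mul] at h
  rw [h, ← ofReal_integral_eq_lintegral_ofReal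
    ((integrable_of_integral_eq_one hqint).comp_sub_right x) (ae_of_all _ fun y => (hq0 _).le),
    integral_sub_right_eq_self q x, hqint, ENNReal.ofReal_one]

/-- The multiplicative change of `V = exp (f - m₀)` expected from a proposal with increment
`Δ = f y - f x` exceeds `1` by at most `1 / (γ - 1)`. -/
lemma accept_exp_le (γ Δ : ℝ) (hγ : 1 < γ) :
    min 1 (Real.exp (-γ * Δ)) * Real.exp Δ + (1 - min 1 (Real.exp (-γ * Δ)))
      ≤ 1 + 1 / (γ - 1) := by
  have hg : 0 < γ - 1 := by linarith
  have hg' : 0 < 1 / (γ - 1) := by positivity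
  rcases le_total Δ 0 with h | h
  · have h1 : Real.exp Δ ≤ 1 := Real.exp_le_one_iff.2 h
    have h2 : (1 : ℝ) ≤ Real.exp (-γ * Δ) := Real.one_le_exp (by nlinarith)
    rw [min_eq_left h2]
    linarith
  · have h2 : Real.exp (-γ * Δ) ≤ 1 := Real.exp_le_one_iff.2 (by nlinarith)
    rw [min_eq_right h2]
    have e1 : Real.exp (-γ * Δ) * Real.exp Δ = Real.exp (-((γ - 1) * Δ)) := by
      rw [← Real.exp_add]; congr 1; ring
    have e2 : Real.exp (-γ * Δ) = Real.exp (-((γ - 1) * Δ)) * Real.exp (-Δ) := by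
      rw [← Real.exp_add]; congr 1; ring
    have h3 : 1 - Δ ≤ Real.exp (-Δ) := by have := Real.add_one_le_exp (-Δ); linarith
    have h4 : Real.exp (-((γ - 1) * Δ)) * ((γ - 1) * Δ) ≤ 1 := by
      rw [Real.exp_neg, inv_mul_le_one₀ (Real.exp_pos _)]
      have := Real.add_one_le_exp ((γ - 1) * Δ); linarith
    have h5 : Real.exp (-((γ - 1) * Δ)) * Δ ≤ 1 / (γ - 1) := by
      rw [le_div_iff₀ hg]; linarith
    have h6 := Real.exp_pos (-((γ - 1) * Δ))
    rw [e1, e2]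
    nlinarith

lemma accept_exp_le_of_le (γ Δ α : ℝ) (hγ : 1 < γ) (hα : 0 < α) (h : Δ ≤ -α) :
    min 1 (Real.exp (-γ * Δ)) * Real.exp Δ + (1 - min 1 (Real.exp (-γ * Δ)))
      ≤ Real.exp (-α) := by
  have h2 : (1 : ℝ) ≤ Real.exp (-γ * Δ) := Real.one_le_exp (by nlinarith)
  rw [min_eq_left h2]
  have := Real.exp_le_exp.2 h
  linarith

/-- Drift estimate at `x`: if proposals `x + z` with `z ∈ J` decrease `f` by at least `α`, they
contribute a definite decrease of `V`. For `J = ∅` this is the crude global bound. -/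
lemma drift_at (f q : ℝ → ℝ) (hf : Continuous f) (hq : Continuous q)
    (hq0 : ∀ y, 0 < q y) (hqint : ∫ y, q y = 1) (γ x m₀ α : ℝ) (hγ : 1 < γ) (hα : 0 < α)
    (J : Set ℝ) (hJ : MeasurableSet J) (hJd : ∀ z ∈ J, f (x + z) - f x ≤ -α) :
    Integrable (fun y => Real.exp (f y - m₀)) (rwmKernel f q γ x) ∧
    ∫ y, Real.exp (f y - m₀) ∂(rwmKernel f q γ x) ≤
      Real.exp (f x - m₀) * (1 + 1 / (γ - 1) - (1 - Real.exp (-α)) * ∫ z in J, q z) := by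
  have hVm : Measurable (fun y => Real.exp (f y - m₀)) :=
    (Real.continuous_exp.comp (hf.sub continuous_const)).measurable
  have hqi : Integrable q := integrable_of_integral_eq_one hqint
  set τ := 1 / (γ - 1) with hτ
  have hτ0 : 0 < τ := by rw [hτ]; have : 0 < γ - 1 := by linarith
                         positivity
  set U : ℝ → ℝ := fun z =>
    Real.exp (f x - m₀) * ((1 + τ) * q z - (1 - Real.exp (-α)) * J.indicator q z) with hU
  have hUi : Integrable U :=
    ((hqi.const_mul _).sub ((hqi.indicator hJ).const_mul _)).const_mul _
  have hUint : ∫ z, U z = Real.exp (f x - m₀) * (1 + τ - (1 - Real.exp (-α)) * ∫ z in J, q z) := by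
    rw [hU, integral_const_mul, integral_sub (hqi.const_mul _) ((hqi.indicator hJ).const_mul _),
      integral_const_mul, integral_const_mul, hqint, integral_indicator hJ, mul_one]
  have hpt : ∀ y, (min 1 (Real.exp (-γ * (f y - f x))) * Real.exp (f y - m₀)
      + (1 - min 1 (Real.exp (-γ * (f y - f x)))) * Real.exp (f x - m₀)) * q (y - x)
      ≤ U (y - x) := by
    intro y
    have e1 : Real.exp (f y - m₀) = Real.exp (f x - m₀) * Real.exp (f y - f x) := by
      rw [← Real.exp_add]; congr 1; ring
    have e2 : (min 1 (Real.exp (-γ * (f y - f x))) * Real.exp (f y - m₀)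
      + (1 - min 1 (Real.exp (-γ * (f y - f x)))) * Real.exp (f x - m₀)) * q (y - x)
      = Real.exp (f x - m₀) * ((min 1 (Real.exp (-γ * (f y - f x))) * Real.exp (f y - f x)
        + (1 - min 1 (Real.exp (-γ * (f y - f x))))) * q (y - x)) := by rw [e1]; ring
    rw [e2, hU]
    refine mul_le_mul_of_nonneg_left ?_ (Real.exp_pos _).le
    have hq' := hq0 (y - x)
    by_cases hy : y - x ∈ J
    · rw [indicator_of_mem hy, ← sub_mul]
      have h1 := hJd _ hy
      rw [add_sub_cancel] at h1
      have h2 := accept_exp_le_of_le γ (f y - f x) α hγ hα h1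
      refine mul_le_mul_of_nonneg_right ?_ hq'.le
      linarith
    · rw [indicator_of_notMem hy, mul_zero, sub_zero]
      exact mul_le_mul_of_nonneg_right (accept_exp_le γ _ hγ) hq'.le
  have hU0 : ∀ y, 0 ≤ U (y - x) := by
    intro y
    refine le_trans ?_ (hpt y)
    have h1 : 0 ≤ min 1 (Real.exp (-γ * (f y - f x))) := le_min zero_le_one (Real.exp_pos _).le
    have h2 : 0 ≤ 1 - min 1 (Real.exp (-γ * (f y - f x))) := sub_nonneg.2 (min_le_left _ _)
    have h3 := (hq0 (y - x)).le
    positivity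
  have hle : ∫⁻ y, ENNReal.ofReal (Real.exp (f y - m₀)) ∂(rwmKernel f q γ x)
      ≤ ENNReal.ofReal (∫ z, U z) := by
    rw [lintegral_rwmKernel f q hf hq hq0 γ x _ hVm (fun y => (Real.exp_pos _).le),
      ← integral_sub_right_eq_self U x,
      ofReal_integral_eq_lintegral_ofReal (hUi.comp_sub_right x) (ae_of_all _ hU0)]
    exact lintegral_mono fun y => ENNReal.ofReal_le_ofReal (hpt y)
  have hUI0 : 0 ≤ ∫ z, U z := by
    rw [← integral_sub_right_eq_self U x]; exact integral_nonneg hU0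
  refine ⟨⟨hVm.aestronglyMeasurable, ?_⟩, ?_⟩
  · rw [hasFiniteIntegral_iff_ofReal (ae_of_all _ fun y => (Real.exp_pos _).le)]
    exact hle.trans_lt ENNReal.ofReal_lt_top
  · rw [← hUint, integral_eq_lintegral_of_nonneg_ae (ae_of_all _ fun y => (Real.exp_pos _).le)
      hVm.aestronglyMeasurable]
    exact ENNReal.toReal_le_of_le_ofReal hUI0 hle

/-- The drift condition holds with constants independent of `γ ≥ γbar`. -/
lemma exists_uniform_drift (f q : ℝ → ℝ) (hf : Continuous f) (hq : Continuous q)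
    (hq0 : ∀ y, 0 < q y) (hqint : ∫ y, q y = 1) (α x₁ m₀ : ℝ) (hα : 0 < α)
    (hgrow1 : ∀ x y : ℝ, x₁ ≤ x → x ≤ y → α * (y - x) ≤ f y - f x)
    (hgrow2 : ∀ x y : ℝ, x ≤ -x₁ → y ≤ x → α * (x - y) ≤ f y - f x) :
    ∃ δ B γbar : ℝ, 0 < δ ∧ δ ≤ 1 ∧ 1 ≤ B ∧ 3 ≤ γbar ∧ ∀ γ, γbar ≤ γ → ∀ x,
      Integrable (fun y => Real.exp (f y - m₀)) (rwmKernel f q γ x) ∧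
      ∫ y, Real.exp (f y - m₀) ∂(rwmKernel f q γ x) ≤ (1 - δ) * Real.exp (f x - m₀) + B := by
  have hqi : Integrable q := integrable_of_integral_eq_one hqint
  have hpos : ∀ a b : ℝ, a < b → 0 < ∫ z in Icc a b, q z := by
    intro a b hab
    rw [integral_Icc_eq_integral_Ioc, ← intervalIntegral.integral_of_le hab.le]
    exact intervalIntegral.intervalIntegral_pos_of_pos (hq.intervalIntegrable _ _) hq0 hab
  have hle1 : ∀ s : Set ℝ, ∫ z in s, q z ≤ 1 := fun s => by
    rw [← hqint]; exact setIntegral_le_integral hqi (ae_of_all _ fun z => (hq0 z).le)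
  set m := min (∫ z in Icc (-2 : ℝ) (-1), q z) (∫ z in Icc (1 : ℝ) 2, q z) with hm
  have hm0 : 0 < m := lt_min (hpos _ _ (by norm_num)) (hpos _ _ (by norm_num))
  have hm1 : m ≤ 1 := (min_le_left _ _).trans (hle1 _)
  have hc0 : 0 < 1 - Real.exp (-α) := by
    have := (Real.exp_lt_one_iff (x := -α)).2 (by linarith); linarith
  have hc1 : 1 - Real.exp (-α) ≤ 1 := by have := Real.exp_pos (-α); linarith
  set c := 1 - Real.exp (-α) with hc
  set δ₀ := c * m with hδ₀
  have hδ0 : 0 < δ₀ := mul_pos hc0 hm0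
  have hδ1 : δ₀ ≤ 1 := mul_le_one₀ hc1 hm0.le hm1
  have hX : x₁ ≤ |x₁| := le_abs_self _
  have hX0 : 0 ≤ |x₁| := abs_nonneg _
  set X := |x₁| with hXdef
  obtain ⟨M, hM⟩ := (isCompact_Icc (a := -(X + 2)) (b := X + 2)).bddAbove_image
    (f := fun x => Real.exp (f x - m₀)) (by fun_prop)
  have hM' : ∀ x, -(X + 2) ≤ x → x ≤ X + 2 → Real.exp (f x - m₀) ≤ M :=
    fun x h1 h2 => hM ⟨x, ⟨h1, h2⟩, rfl⟩
  refine ⟨δ₀ / 2, max 1 (2 * M), 1 + 2 / δ₀, by positivity, by linarith, le_max_left _ _, ?_,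
    fun γ hγ x => ?_⟩
  · have : 2 ≤ 2 / δ₀ := by rw [le_div_iff₀ hδ0]; linarith
    linarith
  · have hτ : 2 / δ₀ ≤ γ - 1 := by linarith
    have h2δ : 2 ≤ 2 / δ₀ := by rw [le_div_iff₀ hδ0]; linarith
    have hγ1 : 1 < γ := by linarith
    have hτ' : 1 / (γ - 1) ≤ δ₀ / 2 := by
      have := one_div_le_one_div_of_le (show 0 < 2 / δ₀ by positivity) hτ
      rwa [one_div_div] at this
    have hV := Real.exp_pos (f x - m₀)
    have hB1 : (1 : ℝ) ≤ max 1 (2 * M) := le_max_left _ _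
    -- far from the origin, the proposals in `J` move towards it and decrease `f` by `α`
    have far : ∀ J : Set ℝ, MeasurableSet J → (∀ z ∈ J, f (x + z) - f x ≤ -α) →
        m ≤ ∫ z in J, q z →
        Integrable (fun y => Real.exp (f y - m₀)) (rwmKernel f q γ x) ∧
        ∫ y, Real.exp (f y - m₀) ∂(rwmKernel f q γ x)
          ≤ (1 - δ₀ / 2) * Real.exp (f x - m₀) + max 1 (2 * M) := by
      intro J hJ hJd hJm
      obtain ⟨h1, h2⟩ := drift_at f q hf hq hq0 hqint γ x m₀ α hγ1 hα J hJ hJd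
      refine ⟨h1, h2.trans ?_⟩
      have h3 : δ₀ ≤ c * ∫ z in J, q z := mul_le_mul_of_nonneg_left hJm hc0.le
      have h4 : Real.exp (f x - m₀) * (1 + 1 / (γ - 1) - c * ∫ z in J, q z)
          ≤ Real.exp (f x - m₀) * (1 - δ₀ / 2) :=
        mul_le_mul_of_nonneg_left (by linarith) hV.le
      linarith
    by_cases h1 : X + 2 ≤ x
    · refine far (Icc (-2) (-1)) measurableSet_Icc (fun z hz => ?_) (min_le_left _ _)
      have h2 := hgrow1 (x + z) x (by linarith [hz.1]) (by linarith [hz.2])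
      have h3 : α * 1 ≤ α * (x - (x + z)) := mul_le_mul_of_nonneg_left (by linarith [hz.2]) hα.le
      linarith
    by_cases h2 : x ≤ -(X + 2)
    · refine far (Icc 1 2) measurableSet_Icc (fun z hz => ?_) (min_le_right _ _)
      have h2 := hgrow2 (x + z) x (by linarith [hz.2]) (by linarith [hz.1])
      have h3 : α * 1 ≤ α * (x + z - x) := mul_le_mul_of_nonneg_left (by linarith [hz.1]) hα.le
      linarith
    · push Not at h1 h2
      obtain ⟨h3, h4⟩ := drift_at f q hf hq hq0 hqint γ x m₀ α hγ1 hα ∅ MeasurableSet.empty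
        (by simp)
      refine ⟨h3, h4.trans ?_⟩
      have h5 := hM' x h2.le h1.le
      have h6 : 2 * M ≤ max 1 (2 * M) := le_max_right _ _
      simp only [Measure.restrict_empty, integral_zero_measure, mul_zero, sub_zero]
      have h7 : Real.exp (f x - m₀) * (1 + 1 / (γ - 1)) ≤ Real.exp (f x - m₀) * 2 :=
        mul_le_mul_of_nonneg_left (by linarith) hV.le
      have h8 : 0 ≤ (1 - δ₀ / 2) * Real.exp (f x - m₀) := mul_nonneg (by linarith) hV.le
      linarith

/-- Minorization on bounded sets, with mass exponentially small in `γ`. -/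
lemma rwmKernel_minorization (f q : ℝ → ℝ) (γ x m₀ D q₀ : ℝ) (hγ : 0 ≤ γ) (hq₀ : 0 ≤ q₀)
    (hD0 : 0 ≤ D) (hD : ∀ y ∈ Icc (0 : ℝ) 1, f y - m₀ ≤ D) (hm₀ : m₀ ≤ f x)
    (hq : ∀ y ∈ Icc (0 : ℝ) 1, q₀ ≤ q (y - x)) :
    ENNReal.ofReal (q₀ * Real.exp (-D * γ)) • volume.restrict (Icc (0 : ℝ) 1)
      ≤ rwmKernel f q γ x := by
  rw [rwmKernel]
  refine le_trans ?_ (Measure.le_add_right le_rfl)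
  rw [← withDensity_const, ← withDensity_indicator measurableSet_Icc]
  refine withDensity_mono (ae_of_all _ fun y => ?_)
  by_cases hy : y ∈ Icc (0 : ℝ) 1
  · rw [indicator_of_mem hy]
    refine ENNReal.ofReal_le_ofReal ?_
    rw [mul_comm]
    refine mul_le_mul ?_ (hq y hy) hq₀ (le_min zero_le_one (Real.exp_pos _).le)
    refine le_min (Real.exp_le_one_iff.2 (by nlinarith)) (Real.exp_le_exp.2 ?_)
    have := hD y hy
    nlinarith
  · rw [indicator_of_notMem hy]
    exact zero_le

/-! ### Gibbs measures -/

lemma integrable_exp_neg_mul_abs (α : ℝ) (hα : 0 < α) :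
    Integrable (fun x : ℝ => Real.exp (-α * |x|)) := by
  rw [← integrableOn_univ, ← Iic_union_Ioi (a := (0 : ℝ))]
  refine IntegrableOn.union ?_ ?_
  · refine (integrableOn_exp_mul_Iic hα 0).congr_fun (fun x hx => ?_) measurableSet_Iic
    simp only [abs_of_nonpos (show x ≤ 0 from hx)]
    congr 1; ring
  · refine (integrableOn_exp_mul_Ioi (neg_lt_zero.2 hα) 0).congr_fun (fun x hx => ?_)
      measurableSet_Ioi
    simp only [abs_of_pos (show 0 < x from hx)]

lemma gibbs_partition_pos (f : ℝ → ℝ) (γ : ℝ)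
    (hint : Integrable (fun x => Real.exp (-γ * f x))) :
    0 < ∫ x, Real.exp (-γ * f x) := integral_exp_pos hint

lemma isProbabilityMeasure_gibbs (f : ℝ → ℝ) (γ : ℝ)
    (hint : Integrable (fun x => Real.exp (-γ * f x))) : IsProbabilityMeasure (gibbs f γ) := by
  have hZ := gibbs_partition_pos f γ hint
  constructor
  rw [gibbs, Measure.smul_apply, withDensity_apply _ MeasurableSet.univ, Measure.restrict_univ,
    smul_eq_mul, ← ofReal_integral_eq_lintegral_ofReal hint (ae_of_all _ fun x => (Real.exp_pos _).le)]
  exact ENNReal.inv_mul_cancel (by simpa using hZ) ENNReal.ofReal_ne_top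

/-- Shifting `f` by `m₀` leaves the Gibbs expectation unchanged. -/
lemma integral_gibbs (f : ℝ → ℝ) (hf : Continuous f) (γ m₀ : ℝ)
    (hint : Integrable (fun x => Real.exp (-γ * f x))) (φ : ℝ → ℝ) :
    ∫ x, φ x ∂(gibbs f γ) =
      (∫ x, φ x * Real.exp (-γ * (f x - m₀))) / ∫ x, Real.exp (-γ * (f x - m₀)) := by
  have e : ∀ x, Real.exp (-γ * f x) = Real.exp (-γ * m₀) * Real.exp (-γ * (f x - m₀)) := by
    intro x; rw [← Real.exp_add]; congr 1; ring
  have hm : Measurable fun x => ENNReal.ofReal (Real.exp (-γ * f x)) := by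
    have : Continuous fun x => Real.exp (-γ * f x) := by fun_prop
    exact this.measurable.ennreal_ofReal
  rw [gibbs, integral_smul_measure, integral_withDensity_eq_integral_toReal_smul hm
    (ae_of_all _ fun x => ENNReal.ofReal_lt_top),
    ← ofReal_integral_eq_lintegral_ofReal hint (ae_of_all _ fun x => (Real.exp_pos _).le),
    ENNReal.toReal_inv, ENNReal.toReal_ofReal (integral_nonneg fun x => (Real.exp_pos _).le)]
  simp only [ENNReal.toReal_ofReal (Real.exp_pos _).le, smul_eq_mul]
  have e1 : ∫ x, Real.exp (-γ * f x)
      = Real.exp (-γ * m₀) * ∫ x, Real.exp (-γ * (f x - m₀)) := by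
    rw [← integral_const_mul]; exact integral_congr_ae (ae_of_all _ e)
  have e2 : ∫ x, Real.exp (-γ * f x) * φ x
      = Real.exp (-γ * m₀) * ∫ x, φ x * Real.exp (-γ * (f x - m₀)) := by
    rw [← integral_const_mul]
    refine integral_congr_ae (ae_of_all _ fun x => ?_)
    simp only [e x]; ring
  rw [e1, e2]
  have := Real.exp_pos (-γ * m₀)
  rw [mul_inv, div_eq_inv_mul]
  field_simp

lemma integrable_gibbs (f : ℝ → ℝ) (hf : Continuous f) (γ m₀ : ℝ)
    (hint : Integrable (fun x => Real.exp (-γ * f x))) (φ : ℝ → ℝ)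
    (hφ : Integrable (fun x => φ x * Real.exp (-γ * (f x - m₀)))) :
    Integrable φ (gibbs f γ) := by
  have e : ∀ x, Real.exp (-γ * f x) = Real.exp (-γ * m₀) * Real.exp (-γ * (f x - m₀)) := by
    intro x; rw [← Real.exp_add]; congr 1; ring
  have hm : Measurable fun x => ENNReal.ofReal (Real.exp (-γ * f x)) := by
    have : Continuous fun x => Real.exp (-γ * f x) := by fun_prop
    exact this.measurable.ennreal_ofReal
  have hZ := gibbs_partition_pos f γ hint
  rw [gibbs]
  refine Integrable.smul_measure ?_ ?_
  · rw [integrable_withDensity_iff_integrable_smul' hm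
      (ae_of_all _ fun x => ENNReal.ofReal_lt_top)]
    simp only [ENNReal.toReal_ofReal (Real.exp_pos _).le, smul_eq_mul]
    refine (hφ.const_mul (Real.exp (-γ * m₀))).congr (ae_of_all _ fun x => ?_)
    simp only [e x]; ring
  · rw [← ofReal_integral_eq_lintegral_ofReal hint (ae_of_all _ fun x => (Real.exp_pos _).le)]
    simpa using hZ

/-- Detailed balance, hence stationarity. -/
lemma gibbs_invariant (f q : ℝ → ℝ) (hf : Continuous f) (hq : Continuous q)
    (hqsym : ∀ y, q (-y) = q y) (γ : ℝ) (κ : Kernel ℝ ℝ) [IsMarkovKernel κ]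
    (hκ : ∀ x, κ x = rwmKernel f q γ x) :
    (gibbs f γ).bind (fun x => κ x) = gibbs f γ := by
  have hrev : Kernel.IsReversible κ (gibbs f γ) := by
    intro A B hA hB
    have hwm : Measurable fun x => ENNReal.ofReal (Real.exp (-γ * f x)) := by
      have : Continuous fun x => Real.exp (-γ * f x) := by fun_prop
      exact this.measurable.ennreal_ofReal
    set w : ℝ → ℝ≥0∞ := fun x => ENNReal.ofReal (Real.exp (-γ * f x)) with hw
    set a : ℝ → ℝ → ℝ≥0∞ := fun x y =>
      ENNReal.ofReal (min 1 (Real.exp (-γ * (f y - f x))) * q (y - x)) with ha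
    set R : ℝ → ℝ≥0∞ := fun x =>
      ∫⁻ y, ENNReal.ofReal ((1 - min 1 (Real.exp (-γ * (f y - f x)))) * q (y - x)) with hR
    have ham : Measurable (fun p : ℝ × ℝ => a p.1 p.2) := measurable_accept f q hf hq γ
    have hRm : Measurable R := (measurable_reject f q hf hq γ).lintegral_prod_right'
    have hsymm : ∀ x y, w x * a x y = w y * a y x := by
      intro x y
      simp only [hw, ha]
      rw [← ENNReal.ofReal_mul (Real.exp_pos _).le, ← ENNReal.ofReal_mul (Real.exp_pos _).le,
        ← mul_assoc, ← mul_assoc, mul_min_of_nonneg _ _ (Real.exp_pos _).le,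
        mul_min_of_nonneg _ _ (Real.exp_pos _).le, ← Real.exp_add, ← Real.exp_add,
        ← hqsym (y - x), neg_sub, mul_one, mul_one]
      rw [show -γ * f x + -γ * (f y - f x) = -γ * f y by ring,
        show -γ * f y + -γ * (f x - f y) = -γ * f x by ring, min_comm]
    have hside : ∀ A B : Set ℝ, MeasurableSet A → MeasurableSet B →
        ∫⁻ x in A, w x * κ x B
          = (∫⁻ x in A, ∫⁻ y in B, w x * a x y) + ∫⁻ x in A ∩ B, w x * R x := by
      intro A B hA hB
      have h1 : ∀ x, w x * κ x B
          = (∫⁻ y in B, w x * a x y) + B.indicator (fun x => w x * R x) x := by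
        intro x
        have hax : Measurable (a x) := ham.comp measurable_prodMk_left
        rw [lintegral_const_mul _ hax, hκ, rwmKernel, Measure.add_apply,
          withDensity_apply _ hB, Measure.smul_apply, Measure.dirac_apply' _ hB, mul_add]
        congr 1
        by_cases hx : x ∈ B <;> simp [hx, hR]
      simp_rw [h1]
      rw [lintegral_add_right _ (Measurable.indicator (f := fun x => w x * R x)
        (hwm.mul hRm) hB), lintegral_indicator hB,
        Measure.restrict_restrict hB, inter_comm B A]
    have hg : ∀ A B : Set ℝ, MeasurableSet A → MeasurableSet B →
        ∫⁻ x in A, κ x B ∂(gibbs f γ) = (∫⁻ x, w x)⁻¹ * ∫⁻ x in A, w x * κ x B := by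
      intro A B hA hB
      rw [gibbs, Measure.restrict_smul, lintegral_smul_measure, restrict_withDensity hA,
        lintegral_withDensity_eq_lintegral_mul _ hwm (κ.measurable_coe hB), smul_eq_mul]
      rfl
    rw [hg A B hA hB, hg B A hB hA, hside A B hA hB, hside B A hB hA, inter_comm B A,
      lintegral_lintegral_swap]
    · simp_rw [hsymm]
    · exact ((hwm.comp measurable_fst).mul ham).aemeasurable
  exact hrev.invariant

/-- Consecutive Gibbs measures are close in the `V`-weighted norm, `V = exp (f - m₀)`. The crude
lower bound `exp (-γ D)` on the partition functions costs a factor `exp (2 γ' D)`. -/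
lemma gibbs_diff (f : ℝ → ℝ) (hf : Continuous f) (α m₀ D : ℝ) (hα : 0 < α) (hD0 : 0 < D)
    (hm₀ : ∀ x, m₀ + α * |x| ≤ f x) (hD : ∀ y ∈ Icc (0 : ℝ) 1, f y - m₀ ≤ D) :
    (∀ γ, 3 ≤ γ → Integrable (fun x => Real.exp (-γ * f x)) ∧
      Integrable (fun x => Real.exp (f x - m₀)) (gibbs f γ)) ∧
    ∃ C : ℝ, 0 ≤ C ∧ ∀ γ γ', 3 ≤ γ → γ ≤ γ' → ∀ t, 0 ≤ t → ∀ φ : ℝ → ℝ, Measurable φ →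
      (∀ x, |φ x| ≤ t * (2 * Real.exp (f x - m₀))) →
      |∫ x, φ x ∂(gibbs f γ) - ∫ x, φ x ∂(gibbs f γ')|
        ≤ t * (C * ((γ' - γ) * Real.exp (2 * D * γ'))) := by
  have hEi := integrable_exp_neg_mul_abs α hα
  set g : ℝ → ℝ := fun x => f x - m₀ with hg
  have hgc : Continuous g := hf.sub continuous_const
  have hgα : ∀ x, α * |x| ≤ g x := fun x => by have := hm₀ x; simp only [hg]; linarith
  have hg0 : ∀ x, 0 ≤ g x := fun x => (by positivity : 0 ≤ α * |x|).trans (hgα x)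
  have hE : ∀ x, Real.exp (-g x) ≤ Real.exp (-α * |x|) := fun x =>
    Real.exp_le_exp.2 (by have := hgα x; linarith)
  set I := ∫ x : ℝ, Real.exp (-α * |x|) with hI
  have hI0 : 0 ≤ I := integral_nonneg fun x => (Real.exp_pos _).le
  have hVe : ∀ γ, 3 ≤ γ → ∀ x, Real.exp (g x) * Real.exp (-γ * g x) ≤ Real.exp (-α * |x|) := by
    intro γ hγ x
    refine le_trans ?_ (hE x)
    rw [← Real.exp_add]
    apply Real.exp_le_exp.2
    nlinarith [hg0 x]
  have hφi : ∀ γ, 3 ≤ γ → ∀ t, 0 ≤ t → ∀ φ : ℝ → ℝ, Measurable φ →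
      (∀ x, |φ x| ≤ t * (2 * Real.exp (g x))) →
      Integrable (fun x => φ x * Real.exp (-γ * g x)) ∧
        |∫ x, φ x * Real.exp (-γ * g x)| ≤ t * (2 * I) := by
    intro γ hγ t ht φ hφ hb
    have hbd : ∀ x, ‖φ x * Real.exp (-γ * g x)‖ ≤ t * (2 * Real.exp (-α * |x|)) := by
      intro x
      rw [Real.norm_eq_abs, abs_mul, abs_of_pos (Real.exp_pos (-γ * g x))]
      calc |φ x| * Real.exp (-γ * g x)
          ≤ t * (2 * Real.exp (g x)) * Real.exp (-γ * g x) :=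
            mul_le_mul_of_nonneg_right (hb x) (Real.exp_pos _).le
        _ = t * (2 * (Real.exp (g x) * Real.exp (-γ * g x))) := by ring
        _ ≤ _ := by gcongr; exact hVe γ hγ x
    have hmi : Integrable (fun x : ℝ => t * (2 * Real.exp (-α * |x|))) :=
      (hEi.const_mul 2).const_mul t
    refine ⟨hmi.mono' (hφ.mul (by fun_prop : Continuous fun x =>
      Real.exp (-γ * g x)).measurable).aestronglyMeasurable (ae_of_all _ hbd), ?_⟩
    have := norm_integral_le_of_norm_le hmi (ae_of_all _ hbd)
    rwa [integral_const_mul, integral_const_mul] at this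
  have hone : ∀ x, |(1 : ℝ)| ≤ 1 / 2 * (2 * Real.exp (g x)) := fun x => by
    have := Real.one_le_exp (hg0 x)
    rw [abs_one]; linarith
  have hZi : ∀ γ, 3 ≤ γ → Integrable (fun x => Real.exp (-γ * g x)) := fun γ hγ => by
    simpa using (hφi γ hγ (1 / 2) (by norm_num) (fun _ => 1) measurable_const hone).1
  have hfi : ∀ γ, 3 ≤ γ → Integrable (fun x => Real.exp (-γ * f x)) := fun γ hγ => by
    refine ((hZi γ hγ).const_mul (Real.exp (-γ * m₀))).congr (ae_of_all _ fun x => ?_)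
    simp only [hg]
    rw [← Real.exp_add]; congr 1; ring
  have hZlow : ∀ γ, 3 ≤ γ → Real.exp (-(D * γ)) ≤ ∫ x, Real.exp (-γ * g x) := by
    intro γ hγ
    have h1 : ∫ x in Icc (0 : ℝ) 1, Real.exp (-(D * γ)) ≤ ∫ x in Icc (0 : ℝ) 1,
        Real.exp (-γ * g x) := by
      refine setIntegral_mono_on (by simp) (hZi γ hγ).integrableOn measurableSet_Icc
        fun x hx => Real.exp_le_exp.2 ?_
      have := hD x hx
      simp only [hg]
      nlinarith
    have h2 := setIntegral_le_integral (s := Icc (0 : ℝ) 1) (hZi γ hγ)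
      (ae_of_all _ fun x => (Real.exp_pos (-γ * g x)).le)
    simp only [setIntegral_const, Real.volume_real_Icc_of_le zero_le_one, sub_zero, one_smul] at h1
    exact h1.trans h2
  have hdiff : ∀ γ γ', 3 ≤ γ → γ ≤ γ' → ∀ t, 0 ≤ t → ∀ φ : ℝ → ℝ, Measurable φ →
      (∀ x, |φ x| ≤ t * (2 * Real.exp (g x))) →
      |(∫ x, φ x * Real.exp (-γ * g x)) - ∫ x, φ x * Real.exp (-γ' * g x)|
        ≤ t * (γ' - γ) * 2 * I := by
    intro γ γ' hγ hγ' t ht φ hφ hb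
    rw [← integral_sub (hφi γ hγ t ht φ hφ hb).1 (hφi γ' (hγ.trans hγ') t ht φ hφ hb).1,
      hI, ← integral_const_mul]
    rw [← Real.norm_eq_abs]
    refine norm_integral_le_of_norm_le (hEi.const_mul _) (ae_of_all _ fun x => ?_)
    rw [← mul_sub, Real.norm_eq_abs, abs_mul]
    have hx := hg0 x
    have h1 : |Real.exp (-γ * g x) - Real.exp (-γ' * g x)|
        ≤ (γ' - γ) * g x * Real.exp (-γ * g x) := by
      have e1 : Real.exp (-γ' * g x) = Real.exp (-γ * g x) * Real.exp (-((γ' - γ) * g x)) := by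
        rw [← Real.exp_add]; congr 1; ring
      have h2 : 0 ≤ (γ' - γ) * g x := mul_nonneg (by linarith) hx
      have h3 := Real.add_one_le_exp (-((γ' - γ) * g x))
      have h4 : Real.exp (-((γ' - γ) * g x)) ≤ 1 := Real.exp_le_one_iff.2 (by linarith)
      have h5 := Real.exp_pos (-γ * g x)
      rw [e1, abs_of_nonneg (by nlinarith)]
      nlinarith
    have h6 : Real.exp (g x) * (g x * Real.exp (-γ * g x)) ≤ Real.exp (-α * |x|) := by
      refine le_trans ?_ (hE x)
      have h7 : g x ≤ Real.exp (g x) := by have := Real.add_one_le_exp (g x); linarith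
      calc Real.exp (g x) * (g x * Real.exp (-γ * g x))
          ≤ Real.exp (g x) * (Real.exp (g x) * Real.exp (-γ * g x)) := by gcongr
        _ = Real.exp (g x + (g x + -γ * g x)) := by rw [Real.exp_add, Real.exp_add]
        _ ≤ Real.exp (-g x) := Real.exp_le_exp.2 (by nlinarith)
    have hγγ : 0 ≤ γ' - γ := by linarith
    calc |φ x| * |Real.exp (-γ * g x) - Real.exp (-γ' * g x)|
        ≤ t * (2 * Real.exp (g x)) * ((γ' - γ) * g x * Real.exp (-γ * g x)) :=
          mul_le_mul (hb x) h1 (abs_nonneg _) (by positivity)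
      _ = t * (γ' - γ) * 2 * (Real.exp (g x) * (g x * Real.exp (-γ * g x))) := by ring
      _ ≤ _ := by gcongr
  refine ⟨fun γ hγ => ⟨hfi γ hγ, ?_⟩, 2 * I + 2 * I * I, by positivity, ?_⟩
  · refine integrable_gibbs f hf γ m₀ (hfi γ hγ) _ ?_
    refine (hφi γ hγ 1 zero_le_one _ (by fun_prop : Continuous fun x =>
      Real.exp (f x - m₀)).measurable fun x => ?_).1
    have := Real.exp_pos (g x)
    rw [abs_of_pos (Real.exp_pos _), one_mul]
    simp only [hg] at this ⊢
    linarith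
  · intro γ γ' hγ hγγ t ht φ hφ hb
    have hγ' : 3 ≤ γ' := hγ.trans hγγ
    rw [integral_gibbs f hf γ m₀ (hfi γ hγ), integral_gibbs f hf γ' m₀ (hfi γ' hγ')]
    have d1 := hdiff γ γ' hγ hγγ t ht φ hφ hb
    have d2 := hdiff γ γ' hγ hγγ (1 / 2) (by norm_num) (fun _ => 1) measurable_const hone
    have d3 := (hφi γ' hγ' t ht φ hφ hb).2
    have z1 := hZlow γ hγ
    have z2 := hZlow γ' hγ'
    simp only [one_mul] at d2
    change |(∫ x, φ x * Real.exp (-γ * g x)) / (∫ x, Real.exp (-γ * g x))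
      - (∫ x, φ x * Real.exp (-γ' * g x)) / (∫ x, Real.exp (-γ' * g x))| ≤ _
    set N := ∫ x, φ x * Real.exp (-γ * g x)
    set N' := ∫ x, φ x * Real.exp (-γ' * g x)
    set Z := ∫ x, Real.exp (-γ * g x)
    set Z' := ∫ x, Real.exp (-γ' * g x)
    have hZ : 0 < Z := (Real.exp_pos _).trans_le z1
    have hZ' : 0 < Z' := (Real.exp_pos _).trans_le z2
    have i1 : Z⁻¹ ≤ Real.exp (D * γ') := by
      rw [← inv_inv (Real.exp (D * γ')), ← Real.exp_neg]
      refine inv_anti₀ (Real.exp_pos _) (le_trans (Real.exp_le_exp.2 ?_) z1)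
      nlinarith
    have i2 : Z'⁻¹ ≤ Real.exp (D * γ') := by
      rw [← inv_inv (Real.exp (D * γ')), ← Real.exp_neg]
      exact inv_anti₀ (Real.exp_pos _) z2
    have e1 : N / Z - N' / Z' = (N - N') * Z⁻¹ + N' * ((Z' - Z) * (Z⁻¹ * Z'⁻¹)) := by
      field_simp; ring
    have e2 : Real.exp (2 * D * γ') = Real.exp (D * γ') * Real.exp (D * γ') := by
      rw [← Real.exp_add]; congr 1; ring
    set G := Real.exp (D * γ')
    have hG1 : 1 ≤ G := Real.one_le_exp (by nlinarith)
    have hs : 0 ≤ γ' - γ := by linarith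
    have b1 : |(N - N') * Z⁻¹| ≤ (t * (γ' - γ) * 2 * I) * (G * G) := by
      rw [abs_mul, abs_of_pos (inv_pos.2 hZ)]
      refine mul_le_mul d1 (i1.trans (le_mul_of_one_le_left (by positivity) hG1))
        (by positivity) (by positivity)
    have b2 : |N' * ((Z' - Z) * (Z⁻¹ * Z'⁻¹))|
        ≤ (t * (2 * I)) * ((1 / 2 * (γ' - γ) * 2 * I) * (G * G)) := by
      rw [abs_mul, abs_mul, abs_of_pos (show 0 < Z⁻¹ * Z'⁻¹ by positivity)]
      rw [abs_sub_comm] at d2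
      gcongr
    rw [e1, e2]
    refine (abs_add_le _ _).trans ((add_le_add b1 b2).trans (le_of_eq ?_))
    ring

/-! ### Convergence of simulated annealing -/

/-- Theorem 12: convergence of simulated annealing. With the logarithmic cooling schedule
`γ_i = log(i+1)/(d(1+ξ)) + γ̄` (for suitable constants `d > 0`, `γ̄ ≥ 0` and any `ξ ≥ 0`),
`‖μ P₁ ⋯ P_n − π_{γ_n}‖_TV → 0` for every initial distribution `μ`, where `P_i = K_{γ_i}`. -/
theorem simulated_annealing_convergence
    (f q : ℝ → ℝ)
    -- (SA0)
    (hf : ContDiff ℝ 2 f) (α x₁ : ℝ) (hα : 0 < α)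
    (hgrow1 : ∀ x y : ℝ, x₁ ≤ x → x ≤ y → α * (y - x) ≤ f y - f x)
    (hgrow2 : ∀ x y : ℝ, x ≤ -x₁ → y ≤ x → α * (x - y) ≤ f y - f x)
    -- (SA1)
    (hSA1 : ∀ x : ℝ, (∀ y, f x ≤ f y) → 0 < deriv (deriv f) x)
    -- (SA2)
    (hqc : Continuous q) (hqpos : ∀ y, 0 < q y) (hqsym : ∀ y, q (-y) = q y)
    (hqint : ∫ y, q y = 1)
    -- the RWMH kernels, as a measurable kernel family
    (K : ℝ → Kernel ℝ ℝ) (hK : ∀ γ x, K γ x = rwmKernel f q γ x) :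
    ∃ d γbar : ℝ, 0 < d ∧ 0 ≤ γbar ∧
      ∀ ξv : ℝ, 0 ≤ ξv →
        ∀ μ : Measure ℝ, IsProbabilityMeasure μ →
          Filter.Tendsto
            (fun n : ℕ =>
              fDist (fun _ => 1)
                (iterMeasNH (fun i => K (Real.log (i + 1) / (d * (1 + ξv)) + γbar)) μ n)
                (gibbs f (Real.log (n + 1) / (d * (1 + ξv)) + γbar)))
            Filter.atTop (nhds 0) := by
  have hfc : Continuous f := hf.continuous
  obtain ⟨m₀, hm₀⟩ := exists_linear_lower_bound f hfc α x₁ hα hgrow1 hgrow2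
  obtain ⟨δ, B, γbar, hδ0, hδ1, hB, hγbar, hdrift⟩ := exists_uniform_drift f q hfc hqc hqpos
    hqint α x₁ m₀ hα hgrow1 hgrow2
  have hVc : Continuous fun x => Real.exp (f x - m₀) := by fun_prop
  have hg : ∀ x, α * |x| ≤ f x - m₀ := fun x => by linarith [hm₀ x]
  have hg0 : ∀ x, 0 ≤ f x - m₀ := fun x => (by positivity : 0 ≤ α * |x|).trans (hg x)
  have hV1 : ∀ x, 1 ≤ Real.exp (f x - m₀) := fun x => Real.one_le_exp (hg0 x)
  -- `D` bounds the height of `f - m₀` over the reference set `[0, 1]`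
  obtain ⟨D, hD0, hD⟩ : ∃ D : ℝ, 0 < D ∧ ∀ y ∈ Icc (0 : ℝ) 1, f y - m₀ ≤ D := by
    obtain ⟨D, hD⟩ := (isCompact_Icc (a := (0 : ℝ)) (b := 1)).bddAbove_image
      (f := fun x => f x - m₀) (by fun_prop)
    exact ⟨max 1 D, by positivity, fun y hy => (hD ⟨y, hy, rfl⟩).trans (le_max_right _ _)⟩
  -- `q₀` bounds the proposal density from the sublevel set `{V ≤ 4B/δ}` to `[0, 1]`
  obtain ⟨q₀, hq₀, hq₀1, hq₀q⟩ : ∃ q₀ : ℝ, 0 < q₀ ∧ q₀ ≤ 1 ∧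
      ∀ x, Real.exp (f x - m₀) ≤ 4 * B / δ → ∀ y ∈ Icc (0 : ℝ) 1, q₀ ≤ q (y - x) := by
    set ρ := Real.log (4 * B / δ) / α with hρ
    have hRpos : 0 < 4 * B / δ := by positivity
    have hR1 : 1 ≤ 4 * B / δ := by rw [le_div_iff₀ hδ0]; linarith
    have hρ0 : 0 ≤ ρ := div_nonneg (Real.log_nonneg hR1) hα.le
    obtain ⟨z, hz, hzmin⟩ := (isCompact_Icc (a := -(1 + ρ)) (b := 1 + ρ)).exists_isMinOn
      ⟨0, by constructor <;> linarith⟩ hqc.continuousOn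
    refine ⟨min 1 (q z), lt_min one_pos (hqpos z), min_le_left _ _, fun x hx y hy => ?_⟩
    refine (min_le_right _ _).trans (hzmin ?_)
    have h1 : f x - m₀ ≤ Real.log (4 * B / δ) := (Real.le_log_iff_exp_le hRpos).2 hx
    have h2 : |x| ≤ ρ := by
      rw [hρ, le_div_iff₀ hα]; linarith [hg x]
    have h3 := abs_le.1 h2
    exact ⟨by linarith [hy.1, hy.2], by linarith [hy.1, hy.2]⟩
  obtain ⟨hgibbs, C, hC0, hC⟩ := gibbs_diff f hfc α m₀ D hα hD0 hm₀ hD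
  refine ⟨6 * D, γbar, by positivity, by linarith, fun ξ hξ μ hμ => ?_⟩
  set γ : ℕ → ℝ := fun n => Real.log ((n : ℝ) + 1) / (6 * D * (1 + ξ)) + γbar with hγ
  obtain ⟨hγge, hγmono, hγlim, hγsum⟩ := schedule_props D γbar ξ hD0 hξ γ (fun n => rfl)
  have hKm : ∀ c, IsMarkovKernel (K c) := fun c => ⟨fun x => by
    rw [hK]; exact isProbabilityMeasure_rwmKernel f q hfc hqc hqpos hqint c x⟩
  have hγ3 : ∀ n, 3 ≤ γ n := fun n => hγbar.trans (hγge n)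
  have hconv : ∀ ν : Measure ℝ, IsProbabilityMeasure ν →
      Integrable (fun x => Real.exp (f x - m₀)) ν → ∃ a : ℕ → ℝ,
      Filter.Tendsto a Filter.atTop (nhds 0) ∧ ∀ n, ∀ φ : ℝ → ℝ, Measurable φ →
        (∀ x, |φ x| ≤ 1) → |∫ x, φ x ∂(iterMeasNH (fun i => K (γ i)) ν n)
          - ∫ x, φ x ∂(gibbs f (γ n))| ≤ a n := by
    intro ν hν hνV
    refine chain_tendsto_of_integrable (fun x => Real.exp (f x - m₀)) hVc.measurable hV1
      (fun i => K (γ i)) (fun i => hKm _) (fun n => gibbs f (γ n))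
      (fun n => isProbabilityMeasure_gibbs f _ (hgibbs _ (hγ3 n)).1)
      (fun n => gibbs_invariant f q hfc hqc hqsym (γ n) (K (γ n)) (hK (γ n)))
      (fun n => (hgibbs _ (hγ3 n)).2) δ B hδ0 hδ1 hB
      (fun n x => by rw [hK]; exact (hdrift _ (hγge n) x).1)
      (fun n x => by rw [hK]; exact (hdrift _ (hγge n) x).2)
      (fun n => q₀ * Real.exp (-D * γ n)) (fun n => by positivity) (fun n => ?_) ?_
      (fun n => ENNReal.ofReal (q₀ * Real.exp (-D * γ n)) • volume.restrict (Icc (0 : ℝ) 1))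
      (fun n => ?_) (fun n x hx => ?_)
      (fun n => C * ((γ (n + 1) - γ n) * Real.exp (2 * D * γ (n + 1)))) (fun n => ?_)
      (fun n t ht φ hφ hb => hC (γ n) (γ (n + 1)) (hγ3 n) (hγmono (Nat.le_succ n)) t ht φ hφ hb)
      ?_ ?_ ν hνV
    · have h1 : Real.exp (-D * γ n) ≤ 1 := Real.exp_le_one_iff.2 (by nlinarith [hγ3 n])
      exact mul_le_one₀ hq₀1 (Real.exp_pos _).le h1
    · intro m n hmn
      have := hγmono hmn
      refine mul_le_mul_of_nonneg_left (Real.exp_le_exp.2 ?_) hq₀.le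
      nlinarith
    · simp only [measureReal_def]
      simpa using (ENNReal.toReal_ofReal (by positivity : 0 ≤ q₀ * Real.exp (-(D * γ n)))).ge
    · rw [hK]
      exact rwmKernel_minorization f q (γ n) x m₀ D q₀ (by linarith [hγ3 n]) hq₀.le hD0.le hD
        (by linarith [hg0 x]) (hq₀q x hx)
    · have := hγmono (Nat.le_succ n)
      have : 0 ≤ γ (n + 1) - γ n := sub_nonneg.2 this
      positivity
    · have h1 := hγlim.const_mul (C / q₀)
      rw [mul_zero] at h1
      refine h1.congr fun n => ?_
      have e : Real.exp (3 * D * γ (n + 1))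
          = Real.exp (2 * D * γ (n + 1)) / Real.exp (-D * γ (n + 1)) := by
        rw [← Real.exp_sub]; congr 1; ring
      rw [e]
      have := Real.exp_pos (-D * γ (n + 1))
      field_simp
    · refine (hγsum.const_mul_atTop hq₀).congr fun n => ?_
      rw [Finset.mul_sum]
  rw [ENNReal.tendsto_nhds_zero]
  intro e he
  obtain ⟨e', he'0, he'⟩ : ∃ e' : ℝ, 0 < e' ∧ ENNReal.ofReal e' ≤ e := by
    refine ⟨(min e 1).toReal, ENNReal.toReal_pos (by simp [he.ne']) (by simp), ?_⟩
    rw [ENNReal.ofReal_toReal (by simp)]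
    exact min_le_left _ _
  obtain ⟨ν, hν, hνV, hμν⟩ := exists_integrable_approx (fun x => Real.exp (f x - m₀))
    hVc.measurable hV1 μ (e' / 2) (by linarith)
  obtain ⟨a, ha, hb⟩ := hconv ν hν hνV
  filter_upwards [ha.eventually (gt_mem_nhds (half_pos he'0))] with n hn
  refine le_trans ?_ he'
  refine iSup_le fun φ => iSup_le fun hφ => iSup_le fun hφ1 => iSup_le fun _ => iSup_le fun _ =>
    ENNReal.ofReal_le_ofReal ?_
  have h1 := iterMeasNH_diff_le (fun i => K (γ i)) (fun i => hKm _) μ ν (e' / 2) hμν n φ hφ hφ1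
  have h2 := hb n φ hφ hφ1
  exact (abs_sub_le _ _ _).trans (by linarith)
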